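/- The Fock-module operators e_j, f_j (j ≥ 0) defined in the context, together with ψ_k := [e_k, f_0], satisfy all of the affine Yangian relations (Y0)–(Y6) listed in the context, with parameters h1, h2, h3 = −h1−h2; in other words, the free vector space F on the set of partitions is a module over the affine Yangian of gl_1. -/

import Mathlib

noncomputable section

/-- A partition: a weakly decreasing function `ℕ → ℕ` (0-indexed rows) that takes the
value `0` somewhere (hence eventually). -/
def IsPtn (f : ℕ → ℕ) : Prop := Antitone f ∧ ∃ N, f N = 0

/-- The type of partitions. -/
abbrev Ptn : Type := {f : ℕ → ℕ // IsPtn f}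

/-- The Fock space: the free `ℂ`-vector space with basis indexed by all partitions. -/
abbrev FockSp : Type := Ptn →₀ ℂ

namespace Fock

/-- The number of nonzero parts of a partition (the first 0-indexed row equal to zero). -/
def plen (lam : Ptn) : ℕ := Nat.find lam.2.2

/-- `|λ| = Σ_i λ_i`. -/
def psize (lam : Ptn) : ℕ := ∑ i ∈ Finset.range (plen lam), lam.1 i

/-- A box may be added in (0-indexed) row `i`, i.e. `λ + 1_i` is again a partition. -/
def Addable (lam : Ptn) (i : ℕ) : Prop := ∀ p, p < i → lam.1 i < lam.1 p

instance (lam : Ptn) (i : ℕ) : Decidable (Addable lam i) :=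
  inferInstanceAs (Decidable (∀ p, p < i → lam.1 i < lam.1 p))

/-- A box may be removed from (0-indexed) row `i`, i.e. `λ − 1_i` is again a partition. -/
def Removable (lam : Ptn) (i : ℕ) : Prop := lam.1 (i + 1) < lam.1 i

instance (lam : Ptn) (i : ℕ) : Decidable (Removable lam i) :=
  inferInstanceAs (Decidable (lam.1 (i + 1) < lam.1 i))

/-- The partition `λ + 1_i`. -/
def addBox (lam : Ptn) (i : ℕ) (h : Addable lam i) : Ptn :=
  ⟨Function.update lam.1 i (lam.1 i + 1), by
    constructor
    · intro a b hab
      rw [Function.update_apply, Function.update_apply]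
      split_ifs with hb ha ha
      · exact le_rfl
      · have : a < i := lt_of_le_of_ne (hb ▸ hab) ha
        exact h a this
      · have : lam.1 b ≤ lam.1 i := lam.2.1 (ha ▸ hab)
        omega
      · exact lam.2.1 hab
    · obtain ⟨N, hN⟩ := lam.2.2
      refine ⟨max N (i + 1), ?_⟩
      rw [Function.update_apply, if_neg (by omega : ¬ max N (i + 1) = i)]
      have := lam.2.1 (le_max_left N (i + 1))
      omega⟩

/-- The partition `λ − 1_i`. -/
def remBox (lam : Ptn) (i : ℕ) (h : Removable lam i) : Ptn :=
  ⟨Function.update lam.1 i (lam.1 i - 1), by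
    constructor
    · intro a b hab
      rw [Function.update_apply, Function.update_apply]
      split_ifs with hb ha ha
      · exact le_rfl
      · have : lam.1 i ≤ lam.1 a := lam.2.1 (le_of_lt (lt_of_le_of_ne (hb ▸ hab) ha))
        omega
      · have h1 : lam.1 b ≤ lam.1 (i + 1) := lam.2.1 (by omega : i + 1 ≤ b)
        have h2 : lam.1 (i + 1) < lam.1 i := h
        omega
      · exact lam.2.1 hab
    · obtain ⟨N, hN⟩ := lam.2.2
      refine ⟨max N (i + 1), ?_⟩
      rw [Function.update_apply, if_neg (by omega : ¬ max N (i + 1) = i)]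
      have := lam.2.1 (le_max_left N (i + 1))
      omega⟩

variable (h1 h2 u : ℂ)

/-- The coefficient of `|λ + 1_i⟩` in `e_j |λ⟩` (0-indexed row `i`). -/
def ecoef (j : ℕ) (lam : Ptn) (i : ℕ) : ℂ :=
  (1 / h1) *
  (∏ p ∈ Finset.range i,
    (((((lam.1 i : ℂ) - (lam.1 p : ℂ)) * h1 + (((i : ℂ) - (p : ℂ)) - 1) * h2)
        * (((lam.1 i : ℂ) - (lam.1 p : ℂ) + 1) * h1 + (((i : ℂ) - (p : ℂ)) + 1) * h2))
      / ((((lam.1 i : ℂ) - (lam.1 p : ℂ)) * h1 + ((i : ℂ) - (p : ℂ)) * h2)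
        * (((lam.1 i : ℂ) - (lam.1 p : ℂ) + 1) * h1 + ((i : ℂ) - (p : ℂ)) * h2)))) *
  ((lam.1 i : ℂ) * h1 + (i : ℂ) * h2 + u) ^ j

/-- The coefficient of `|λ − 1_i⟩` in `f_j |λ⟩` (0-indexed row `i`). -/
def fcoef (j : ℕ) (lam : Ptn) (i : ℕ) : ℂ :=
  (-(1 / h1)) *
  ((((lam.1 (i+1) : ℂ) - (lam.1 i : ℂ)) * h1)
      / ((((lam.1 (i+1) : ℂ) - (lam.1 i : ℂ)) + 1) * h1 + h2)) *
  (∏ p ∈ Finset.Icc (i + 1) (plen lam),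
    (((((lam.1 p : ℂ) - (lam.1 i : ℂ) + 1) * h1 + (((p : ℂ) - (i : ℂ)) + 1) * h2)
        * (((lam.1 (p+1) : ℂ) - (lam.1 i : ℂ)) * h1 + ((p : ℂ) - (i : ℂ)) * h2))
      / ((((lam.1 (p+1) : ℂ) - (lam.1 i : ℂ) + 1) * h1 + (((p : ℂ) - (i : ℂ)) + 1) * h2)
        * (((lam.1 p : ℂ) - (lam.1 i : ℂ)) * h1 + ((p : ℂ) - (i : ℂ)) * h2)))) *
  (((lam.1 i : ℂ) - 1) * h1 + (i : ℂ) * h2 + u) ^ j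

/-- `e_j |λ⟩`, a finite sum over the rows where a box can be added (all of which lie in
`{0, …, plen λ}`). -/
def evec (j : ℕ) (lam : Ptn) : FockSp :=
  ∑ i ∈ Finset.range (plen lam + 1),
    if h : Addable lam i then Finsupp.single (addBox lam i h) (ecoef h1 h2 u j lam i) else 0

/-- `f_j |λ⟩`, a finite sum over the rows where a box can be removed (all of which lie in
`{0, …, plen λ − 1}`). -/
def fvec (j : ℕ) (lam : Ptn) : FockSp :=
  ∑ i ∈ Finset.range (plen lam),
    if h : Removable lam i then Finsupp.single (remBox lam i h) (fcoef h1 h2 u j lam i) else 0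

/-- The Fock-module operator `e_j`. -/
def eOp (j : ℕ) : Module.End ℂ FockSp :=
  Finsupp.lsum ℂ fun lam => LinearMap.toSpanSingleton ℂ FockSp (evec h1 h2 u j lam)

/-- The Fock-module operator `f_j`. -/
def fOp (j : ℕ) : Module.End ℂ FockSp :=
  Finsupp.lsum ℂ fun lam => LinearMap.toSpanSingleton ℂ FockSp (fvec h1 h2 u j lam)

/-- `ψ_k := [e_k, f_0]`. -/
def psiOp (k : ℕ) : Module.End ℂ FockSp :=
  eOp h1 h2 u k * fOp h1 h2 u 0 - fOp h1 h2 u 0 * eOp h1 h2 u k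

end Fock


open Fock

/-!
Rewritten in the positions `x i = λ i * h1 + i * h2 + u` of the free boxes, the operators `e_j` and
`f_j` are sums over rows of commuting moves of a single box. The coefficient of a move is a product
of values `φ (x i - x p)` of the structure function
`φ t = (t - h2) (t + h1 + h2) / (t (t + h1))` over the rows `p` above, respectively below, row `i`.

Restricted to the first `N` rows, these formulas make sense on arbitrary integral sequences. There
the relations among the `e_j`, or among the `f_j`, compare the possible orders of two or three moves
and reduce to rational identities in two or three variables. Moves of different rows contribute
nothing to `[e_i, f_j]`, so this commutator is diagonal; its eigenvalues are the residue sums of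
`z ^ (i + j)` times a product of structure functions. The effect of a move on this product gives the
relations with `ψ`, and Lagrange interpolation evaluates its low moments.

On a fixed partition and for `N` large, the boundary terms of the restricted operators vanish, so
the relations descend to the Fock space.
-/

section Relations

variable {K A : Type*} [CommRing K] [Ring A] [Module K A]

/-- The cubic exchange relation between two sequences of modes. In generating-series form it reads
`∏ₖ (z - w - hₖ) x(z) y(w) = ∏ₖ (z - w + hₖ) y(w) x(z)`, where `h₁ + h₂ + h₃ = 0` and `σ₂`, `σ₃`
are the elementary symmetric functions of the `hₖ`. -/
def CubicExchange (σ₂ σ₃ : K) (x y : ℕ → A) : Prop :=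
  ∀ i j : ℕ,
    (x (i+3) * y j - y j * x (i+3))
      - 3 • (x (i+2) * y (j+1) - y (j+1) * x (i+2))
      + 3 • (x (i+1) * y (j+2) - y (j+2) * x (i+1))
      - (x i * y (j+3) - y (j+3) * x i)
      + σ₂ • ((x (i+1) * y j - y j * x (i+1)) - (x i * y (j+1) - y (j+1) * x i))
    = σ₃ • (x i * y j + y j * x i)

/-- The cubic Serre relation for a sequence of modes. -/
def SerreRelation (x : ℕ → A) : Prop :=
  ∀ i : Fin 3 → ℕ, ∑ σ : Equiv.Perm (Fin 3),
    (x (i (σ 0)) * (x (i (σ 1)) * x (i (σ 2) + 1) - x (i (σ 2) + 1) * x (i (σ 1)))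
      - (x (i (σ 1)) * x (i (σ 2) + 1) - x (i (σ 2) + 1) * x (i (σ 1))) * x (i (σ 0))) = 0

end Relations

section Separation

variable {ι K : Type*} [Field K]

/-- A family of points is separated with respect to `κ` if no two of them differ by an integer
multiple of `κ`. -/
def Separated (κ : K) (x : ι → K) : Prop :=
  ∀ ⦃a b⦄, a ≠ b → ∀ k : ℤ, x a - x b + k * κ ≠ 0

namespace Separated

variable {κ : K} {x : ι → K} (hx : Separated κ x) {a b : ι} (hab : a ≠ b)
include hx hab

theorem sub_ne_zero : x a - x b ≠ 0 := by
  simpa using hx hab 0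

theorem sub_add_ne_zero : x a - x b + κ ≠ 0 := by
  simpa using hx hab 1

theorem sub_sub_ne_zero : x a - x b - κ ≠ 0 := by
  simpa [sub_eq_add_neg] using hx hab (-1)

end Separated

end Separation

section StructureFunction

variable {K : Type*} [Field K]

/-- The factor contributed to the coefficient of a box move by another row, as a function of the
difference of the two box positions. -/
def structureFun (κ₁ κ₂ t : K) : K := ((t - κ₂) * (t + κ₁ + κ₂)) / (t * (t + κ₁))

variable {κ₁ κ₂ t : K}

theorem structureFun_eq_one_sub (ht : t ≠ 0) (htp : t + κ₁ ≠ 0) :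
    structureFun κ₁ κ₂ t = 1 - κ₂ * (κ₁ + κ₂) / (t * (t + κ₁)) := by
  unfold structureFun
  field_simp
  ring

theorem structureFun_sub_eq_one_sub (ht : t ≠ 0) (htm : t - κ₁ ≠ 0) :
    structureFun κ₁ κ₂ (t - κ₁) = 1 - κ₂ * (κ₁ + κ₂) / ((t - κ₁) * t) := by
  rw [structureFun_eq_one_sub htm (by simpa using ht), sub_add_cancel]

theorem structureFun_neg : structureFun (-κ₁) (-κ₂) (-t) = structureFun κ₁ κ₂ t := by
  unfold structureFun
  congr 1 <;> ring

theorem structureFun_reflect : structureFun κ₁ κ₂ (-t - κ₁) = structureFun κ₁ κ₂ t := by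
  unfold structureFun
  congr 1 <;> ring

theorem structureFun_shift (ht : t ≠ 0) (htp : t + κ₁ ≠ 0) (htm : t - κ₁ ≠ 0) :
    (t - κ₁) * (t - κ₂) * (t + κ₁ + κ₂) * structureFun κ₁ κ₂ (t - κ₁) =
      (t + κ₁) * (t + κ₂) * (t - κ₁ - κ₂) * structureFun κ₁ κ₂ t := by
  rw [structureFun_sub_eq_one_sub ht htm, structureFun_eq_one_sub ht htp]
  field_simp
  ring

/-- The Serre relation for three distinct rows; `s` and `t` are the successive differences of the
box positions. -/
theorem structureFun_serre {s : K} (hs : s ≠ 0) (hsp : s + κ₁ ≠ 0) (hsm : s - κ₁ ≠ 0)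
    (ht : t ≠ 0) (htp : t + κ₁ ≠ 0) (htm : t - κ₁ ≠ 0)
    (hst : s + t ≠ 0) (hstp : s + t + κ₁ ≠ 0) (hstm : s + t - κ₁ ≠ 0) :
    let g := structureFun κ₁ κ₂
    (t - s) * (g (s - κ₁) * g (s + t - κ₁) * g (t - κ₁))
      + (-s - 2 * t) * (g (s - κ₁) * g (s + t - κ₁) * g t)
      + (2 * s + t) * (g s * g (s + t - κ₁) * g (t - κ₁))
      + (2 * s + t) * (g (s - κ₁) * g (s + t) * g t)
      + (-s - 2 * t) * (g s * g (s + t) * g (t - κ₁))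
      + (t - s) * (g s * g (s + t) * g t) = 0 := by
  intro g
  simp only [g, structureFun_sub_eq_one_sub, structureFun_eq_one_sub, hs, hsp, hsm, ht, htp, htm,
    hst, hstp, hstm, ne_eq, not_false_eq_true]
  generalize κ₂ * (κ₁ + κ₂) = c
  field_simp
  ring

/-- The Serre relation for two boxes in one row and one in another. -/
theorem structureFun_serre_repeat (ht : t ≠ 0) (htp : t + κ₁ ≠ 0) (htm : t - κ₁ ≠ 0)
    (htm2 : t - κ₁ - κ₁ ≠ 0) :
    let g := structureFun κ₁ κ₂
    (t - 2 * κ₁) * g (t - κ₁ - κ₁) + (κ₁ - 2 * t) * g (t - κ₁) + (t + κ₁) * g t = 0 := by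
  intro g
  simp only [g]
  rw [structureFun_sub_eq_one_sub htm htm2, structureFun_sub_eq_one_sub ht htm,
    structureFun_eq_one_sub ht htp]
  field_simp
  ring

end StructureFunction

section SymmetricSums

variable {ι M : Type*} [AddCommGroup M]

theorem sum_sum_eq_zero_of_antisymm [IsAddTorsionFree M] (s : Finset ι) (T : ι → ι → M)
    (h : ∀ a ∈ s, ∀ b ∈ s, T a b + T b a = 0) : ∑ a ∈ s, ∑ b ∈ s, T a b = 0 := by
  have hdouble : 2 • ∑ a ∈ s, ∑ b ∈ s, T a b = 0 := by
    rw [two_nsmul]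
    nth_rewrite 2 [Finset.sum_comm]
    simp only [← Finset.sum_add_distrib]
    exact Finset.sum_eq_zero fun a ha => Finset.sum_eq_zero fun b hb => h a ha b hb
  exact (smul_eq_zero.1 hdouble).resolve_left two_ne_zero

theorem sum_sum_sum_eq_zero_of_symmetrization [IsAddTorsionFree M] (s : Finset ι)
    (T : ι → ι → ι → M)
    (h : ∀ a ∈ s, ∀ b ∈ s, ∀ c ∈ s,
      T a b c + T a c b + T b a c + T b c a + T c a b + T c b a = 0) :
    ∑ a ∈ s, ∑ b ∈ s, ∑ c ∈ s, T a b c = 0 := by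
  have swap₁₂ (F : ι → ι → ι → M) :
      ∑ a ∈ s, ∑ b ∈ s, ∑ c ∈ s, F b a c = ∑ a ∈ s, ∑ b ∈ s, ∑ c ∈ s, F a b c :=
    Finset.sum_comm
  have swap₂₃ (F : ι → ι → ι → M) :
      ∑ a ∈ s, ∑ b ∈ s, ∑ c ∈ s, F a c b = ∑ a ∈ s, ∑ b ∈ s, ∑ c ∈ s, F a b c :=
    Finset.sum_congr rfl fun a _ => Finset.sum_comm
  have hsix : 6 • ∑ a ∈ s, ∑ b ∈ s, ∑ c ∈ s, T a b c = 0 := by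
    have hsum := Finset.sum_eq_zero fun a ha => Finset.sum_eq_zero fun b hb =>
      Finset.sum_eq_zero fun c hc => h a ha b hb c hc
    simp only [Finset.sum_add_distrib] at hsum
    rw [swap₂₃ T, swap₁₂ T, swap₁₂ fun a b c => T a c b, swap₂₃ T,
      swap₂₃ fun a b c => T b a c, swap₁₂ T, swap₁₂ fun a b c => T c a b,
      swap₂₃ fun a b c => T b a c, swap₁₂ T] at hsum
    rw [← hsum]
    abel
  exact (smul_eq_zero.1 hsix).resolve_left (by norm_num)

theorem sum_perm_fin_three {M : Type*} [AddCommMonoid M] (F : Fin 3 → Fin 3 → Fin 3 → M) :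
    ∑ σ : Equiv.Perm (Fin 3), F (σ 0) (σ 1) (σ 2) =
      F 0 1 2 + F 0 2 1 + F 1 0 2 + F 1 2 0 + F 2 0 1 + F 2 1 0 := by
  have h : (Finset.univ : Finset (Equiv.Perm (Fin 3))) = {1, Equiv.swap 1 2, Equiv.swap 0 1,
      finRotate 3, (finRotate 3)⁻¹, Equiv.swap 0 2} := by decide
  rw [h, Finset.sum_insert (by decide), Finset.sum_insert (by decide),
    Finset.sum_insert (by decide), Finset.sum_insert (by decide), Finset.sum_insert (by decide),
    Finset.sum_singleton]
  simp only [add_assoc]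
  rfl

end SymmetricSums

/-- A family of commuting moves on states `X`, one for each row in `rows`. The move in a row sends
the position of that row to its translate by `κ₁`, and positions of different rows stay
incongruent modulo `ℤ κ₁`. The moves carry coefficients whose dependence on the other rows is the
product of `structureFun κ₁ κ₂` over the rows that precede the given one with respect to `r`;
`own` is the remaining factor. -/
structure BoxMoves (X : Type*) {ι K : Type*} [Field K] (r : ι → ι → Prop) (κ₁ κ₂ : K) where
  rows : Finset ι
  step : X → ι → X
  pos : X → ι → K
  own : X → ι → K
  step_comm : ∀ f a b, step (step f a) b = step (step f b) a
  pos_step_self : ∀ f a, pos (step f a) a = pos f a + κ₁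
  pos_step_of_ne : ∀ f {a b}, b ≠ a → pos (step f a) b = pos f b
  own_step_of_ne : ∀ f {a b}, b ≠ a → own (step f a) b = own f b
  separated : ∀ f, Separated κ₁ (pos f)

namespace BoxMoves

variable {X ι K : Type*} [Field K] {r : ι → ι → Prop} {κ₁ κ₂ : K}

variable [DecidableRel r]

/-- The factor that row `p` contributes to the coefficient of the move in row `a`. -/
def factor (D : BoxMoves X r κ₁ κ₂) (f : X) (p a : ι) : K :=
  if r p a then structureFun κ₁ κ₂ (D.pos f a - D.pos f p) else 1

/-- The coefficient of the move in row `a`. -/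
def coef (D : BoxMoves X r κ₁ κ₂) (f : X) (a : ι) : K :=
  D.own f a * ∏ p ∈ D.rows, D.factor f p a

/-- The part of the coefficient of the move in row `a` not contributed by the rows in `T`. -/
def coefAway [DecidableEq ι] (D : BoxMoves X r κ₁ κ₂) (T : Finset ι) (f : X) (a : ι) : K :=
  D.own f a * ∏ p ∈ D.rows \ T, D.factor f p a

/-- The operator of mode `j`: it makes a move in every row, weighting the move by its coefficient
times the `j`-th power of its position. -/
def op (D : BoxMoves X r κ₁ κ₂) (j : ℕ) : Module.End K (X →₀ K) :=
  Finsupp.lsum K fun f => LinearMap.toSpanSingleton K (X →₀ K)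
    (∑ a ∈ D.rows, Finsupp.single (D.step f a) (D.coef f a * D.pos f a ^ j))

section Coefficients

variable (D : BoxMoves X r κ₁ κ₂)

theorem op_single (j : ℕ) (f : X) (c : K) :
    D.op j (Finsupp.single f c) =
      ∑ a ∈ D.rows, Finsupp.single (D.step f a) (c * (D.coef f a * D.pos f a ^ j)) := by
  simp [op, Finset.smul_sum, -Finsupp.single_mul]

theorem factor_of_rel (f : X) {a b : ι} (h : r a b) :
    D.factor f a b = structureFun κ₁ κ₂ (D.pos f b - D.pos f a) :=
  if_pos h

theorem factor_of_rel_swap [Std.Asymm r] (f : X) {a b : ι} (h : r a b) : D.factor f b a = 1 :=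
  if_neg (asymm h)

theorem factor_step_of_ne (f : X) {a b p : ι} (ha : a ≠ b) (hp : p ≠ b) :
    D.factor (D.step f b) p a = D.factor f p a := by
  simp only [factor, D.pos_step_of_ne f ha, D.pos_step_of_ne f hp]

variable [DecidableEq ι]

theorem coef_eq_coefAway_mul (f : X) (a : ι) {b : ι} (hb : b ∈ D.rows) :
    D.coef f a = D.coefAway {b} f a * D.factor f b a := by
  rw [coef, coefAway, mul_assoc, Finset.prod_eq_prod_sdiff_singleton_mul hb]

theorem coef_eq_coefAway_mul_mul (f : X) (a : ι) {b c : ι} (hb : b ∈ D.rows) (hc : c ∈ D.rows)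
    (hbc : b ≠ c) :
    D.coef f a = D.coefAway {b, c} f a * D.factor f b a * D.factor f c a := by
  have hsub : ({b, c} : Finset ι) ⊆ D.rows := by simp [Finset.insert_subset_iff, hb, hc]
  rw [coef, coefAway, ← Finset.prod_sdiff hsub, Finset.prod_pair hbc]
  ring

theorem coefAway_step (f : X) {T : Finset ι} {a b : ι} (hb : b ∈ T) (hab : a ≠ b) :
    D.coefAway T (D.step f b) a = D.coefAway T f a := by
  rw [coefAway, coefAway, D.own_step_of_ne f hab]
  congr 1
  refine Finset.prod_congr rfl fun p hp => D.factor_step_of_ne f hab ?_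
  rintro rfl
  exact (Finset.mem_sdiff.1 hp).2 hb

end Coefficients

section Words

variable (D : BoxMoves X r κ₁ κ₂) (f : X)

/-- The result of two successive modes applied to the basis vector `f`, with the monomial in the
two positions (last move first) replaced by an arbitrary function. -/
def word₂ : (K → K → K) →ₗ[K] (X →₀ K) where
  toFun φ := ∑ a ∈ D.rows, ∑ b ∈ D.rows,
    (φ (D.pos (D.step f a) b) (D.pos f a) * (D.coef f a * D.coef (D.step f a) b)) •
      Finsupp.single (D.step (D.step f a) b) (1 : K)
  map_add' φ φ' := by simp only [Pi.add_apply, add_mul, add_smul, Finset.sum_add_distrib]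
  map_smul' c φ := by
    simp only [Pi.smul_apply, smul_eq_mul, mul_assoc, mul_smul, Finset.smul_sum, RingHom.id_apply]

/-- The result of three successive modes applied to the basis vector `f`, with the monomial in the
three positions (last move first) replaced by an arbitrary function. -/
def word₃ : (K → K → K → K) →ₗ[K] (X →₀ K) where
  toFun φ := ∑ a ∈ D.rows, ∑ b ∈ D.rows, ∑ c ∈ D.rows,
    (φ (D.pos (D.step (D.step f a) b) c) (D.pos (D.step f a) b) (D.pos f a) *
      (D.coef f a * D.coef (D.step f a) b * D.coef (D.step (D.step f a) b) c)) •
      Finsupp.single (D.step (D.step (D.step f a) b) c) (1 : K)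
  map_add' φ φ' := by simp only [Pi.add_apply, add_mul, add_smul, Finset.sum_add_distrib]
  map_smul' c φ := by
    simp only [Pi.smul_apply, smul_eq_mul, mul_assoc, mul_smul, Finset.smul_sum, RingHom.id_apply]

theorem op_op_single (i j : ℕ) :
    D.op i (D.op j (Finsupp.single f 1)) = D.word₂ f fun z w => z ^ i * w ^ j := by
  simp only [op_single, map_sum, word₂, LinearMap.coe_mk, AddHom.coe_mk, Finsupp.smul_single,
    smul_eq_mul]
  refine Finset.sum_congr rfl fun a _ => Finset.sum_congr rfl fun b _ => ?_
  congr 1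
  ring

theorem op_op_op_single (i j k : ℕ) :
    D.op i (D.op j (D.op k (Finsupp.single f 1))) =
      D.word₃ f fun z w v => z ^ i * w ^ j * v ^ k := by
  simp only [op_single, map_sum, word₃, LinearMap.coe_mk, AddHom.coe_mk, Finsupp.smul_single,
    smul_eq_mul]
  refine Finset.sum_congr rfl fun a _ => Finset.sum_congr rfl fun b _ =>
    Finset.sum_congr rfl fun c _ => ?_
  congr 1
  ring

end Words

section Exchange

variable [IsStrictTotalOrder ι r] (D : BoxMoves X r κ₁ κ₂) (f : X)

theorem coef_mul_coef_step {a b : ι} (ha : a ∈ D.rows) (hb : b ∈ D.rows) (hab : a ≠ b) :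
    let t := D.pos f b - D.pos f a
    (t - κ₁) * (t - κ₂) * (t + κ₁ + κ₂) * (D.coef f a * D.coef (D.step f a) b) =
      (t + κ₁) * (t + κ₂) * (t - κ₁ - κ₂) * (D.coef f b * D.coef (D.step f b) a) := by
  classical
  intro t
  have hshift := structureFun_shift (κ₂ := κ₂) ((D.separated f).sub_ne_zero hab.symm)
    ((D.separated f).sub_add_ne_zero hab.symm) ((D.separated f).sub_sub_ne_zero hab.symm)
  have hshift' := structureFun_shift (κ₂ := κ₂) ((D.separated f).sub_ne_zero hab)
    ((D.separated f).sub_add_ne_zero hab) ((D.separated f).sub_sub_ne_zero hab)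
  simp only [D.coef_eq_coefAway_mul _ a hb, D.coef_eq_coefAway_mul _ b ha,
    D.coefAway_step f (Finset.mem_singleton_self _) hab,
    D.coefAway_step f (Finset.mem_singleton_self _) hab.symm, t]
  rcases trichotomous_of r a b with h | h | h
  · simp only [D.factor_of_rel _ h, D.factor_of_rel_swap _ h, D.pos_step_self,
      D.pos_step_of_ne _ hab.symm, ← sub_sub]
    linear_combination D.coefAway {b} f a * D.coefAway {a} f b * hshift
  · exact absurd h hab
  · simp only [D.factor_of_rel _ h, D.factor_of_rel_swap _ h, D.pos_step_self,
      D.pos_step_of_ne _ hab, ← sub_sub]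
    linear_combination D.coefAway {b} f a * D.coefAway {a} f b * hshift'

theorem cubicExchange_op [CharZero K] :
    CubicExchange (κ₁ * κ₂ + κ₁ * (-κ₁ - κ₂) + κ₂ * (-κ₁ - κ₂)) (κ₁ * κ₂ * (-κ₁ - κ₂))
      D.op D.op := by
  intro i j
  refine Finsupp.lhom_ext' fun f => LinearMap.ext_ring ?_
  simp only [LinearMap.comp_apply, Finsupp.lsingle_apply, LinearMap.sub_apply, LinearMap.add_apply,
    LinearMap.smul_apply, Module.End.mul_apply, op_op_single]
  simp only [← map_sub, ← map_add, ← map_nsmul, ← map_smul]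
  rw [← sub_eq_zero, ← map_sub]
  refine sum_sum_eq_zero_of_antisymm _ _ fun a ha b hb => ?_
  rw [D.step_comm f b a, ← add_smul]
  convert zero_smul K _
  simp only [Pi.sub_apply, Pi.add_apply, Pi.smul_apply, smul_eq_mul]
  simp only [nsmul_eq_mul]
  rcases eq_or_ne a b with rfl | hab
  · rw [pos_step_self]
    push_cast
    ring
  · have h := D.coef_mul_coef_step f ha hb hab
    have h' := D.coef_mul_coef_step f hb ha hab.symm
    rw [D.pos_step_of_ne f hab, D.pos_step_of_ne f hab.symm]
    generalize D.pos f a = x at *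
    generalize D.pos f b = y at *
    push_cast
    linear_combination y ^ i * x ^ j * h + x ^ i * y ^ j * h'

end Exchange

section Serre

variable (D : BoxMoves X r κ₁ κ₂)

/-- The coefficient of the successive moves in rows `a`, `b`, `c` in the cubic Serre relation; `m`
stands for the symmetrised monomial in the positions. -/
def serreTerm (m : K → K → K → K) (f : X) (a b c : ι) : K :=
  (D.pos (D.step (D.step f a) b) c - 2 * D.pos (D.step f a) b + D.pos f a) *
    m (D.pos (D.step (D.step f a) b) c) (D.pos (D.step f a) b) (D.pos f a) *
    (D.coef f a * D.coef (D.step f a) b * D.coef (D.step (D.step f a) b) c)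

variable [IsStrictTotalOrder ι r] {m : K → K → K → K} (h₁₂ : ∀ x y z, m x y z = m y x z)
  (h₂₃ : ∀ x y z, m x y z = m x z y) (f : X) {a b c : ι}
include h₁₂ h₂₃

theorem serreTerm_symmetrization_of_rel (ha : a ∈ D.rows) (hb : b ∈ D.rows) (hc : c ∈ D.rows)
    (rab : r a b) (rbc : r b c) :
    D.serreTerm m f a b c + D.serreTerm m f a c b + D.serreTerm m f b a c
      + D.serreTerm m f b c a + D.serreTerm m f c a b + D.serreTerm m f c b a = 0 := by
  classical
  have rac : r a c := _root_.trans rab rbc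
  have hab : a ≠ b := ne_of_irrefl rab
  have hbc : b ≠ c := ne_of_irrefl rbc
  have hac : a ≠ c := ne_of_irrefl rac
  have hadd : D.pos f b - D.pos f a + (D.pos f c - D.pos f b) = D.pos f c - D.pos f a := by ring
  have key := structureFun_serre (κ₂ := κ₂)
    ((D.separated f).sub_ne_zero hab.symm) ((D.separated f).sub_add_ne_zero hab.symm)
    ((D.separated f).sub_sub_ne_zero hab.symm)
    ((D.separated f).sub_ne_zero hbc.symm) ((D.separated f).sub_add_ne_zero hbc.symm)
    ((D.separated f).sub_sub_ne_zero hbc.symm)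
    (hadd ▸ (D.separated f).sub_ne_zero hac.symm) (hadd ▸ (D.separated f).sub_add_ne_zero hac.symm)
    (hadd ▸ (D.separated f).sub_sub_ne_zero hac.symm)
  simp only [serreTerm, D.coef_eq_coefAway_mul_mul _ a hb hc hbc,
    D.coef_eq_coefAway_mul_mul _ b ha hc hac, D.coef_eq_coefAway_mul_mul _ c ha hb hab,
    coefAway_step, factor_of_rel, factor_of_rel_swap, rab, rbc, rac, pos_step_self,
    pos_step_of_ne, Finset.mem_insert, Finset.mem_singleton, true_or, or_true, ne_eq, hab, hbc,
    hac, hab.symm, hbc.symm, hac.symm, not_false_eq_true, mul_one, ← sub_sub, hadd] at key ⊢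
  generalize D.pos f a = x at *
  generalize D.pos f b = y at *
  generalize D.pos f c = z at *
  rw [h₁₂ y z x, h₂₃ z y x, h₁₂ z x y, h₂₃ x z y, h₁₂ y x z]
  linear_combination
    D.coefAway {b, c} f a * D.coefAway {a, c} f b * D.coefAway {a, b} f c * m x y z * key

theorem serreTerm_symmetrization_repeat (ha : a ∈ D.rows) (hb : b ∈ D.rows) (hab : a ≠ b) :
    D.serreTerm m f a a b + D.serreTerm m f a b a + D.serreTerm m f b a a = 0 := by
  classical
  have hcomm : D.step (D.step f b) a = D.step (D.step f a) b := D.step_comm f b a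
  simp only [serreTerm, hcomm, D.coef_eq_coefAway_mul _ a hb, D.coef_eq_coefAway_mul _ b ha,
    coefAway_step, pos_step_self, pos_step_of_ne, Finset.mem_singleton, ne_eq, hab, hab.symm,
    not_false_eq_true]
  rw [h₁₂ (D.pos f a + κ₁) (D.pos f b), h₂₃ (D.pos f a + κ₁) (D.pos f a) (D.pos f b),
    h₁₂ (D.pos f a + κ₁) (D.pos f b)]
  set C := D.coefAway {b} f a * D.coefAway {b} (D.step f a) a * D.coefAway {a} f b *
    m (D.pos f b) (D.pos f a + κ₁) (D.pos f a)
  rcases trichotomous_of r a b with h | h | h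
  · have key := structureFun_serre_repeat (κ₂ := κ₂) ((D.separated f).sub_ne_zero hab.symm)
      ((D.separated f).sub_add_ne_zero hab.symm) ((D.separated f).sub_sub_ne_zero hab.symm)
      (by simpa only [pos_step_self, D.pos_step_of_ne f hab.symm, sub_sub] using
        (D.separated (D.step f a)).sub_sub_ne_zero hab.symm)
    simp only [factor_of_rel, factor_of_rel_swap, h, pos_step_self, pos_step_of_ne, ne_eq,
      hab.symm, not_false_eq_true, mul_one, ← sub_sub]
    linear_combination C * key
  · exact absurd h hab
  · have key := structureFun_serre_repeat (κ₂ := κ₂) ((D.separated f).sub_add_ne_zero hab)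
      (by simpa only [pos_step_self, D.pos_step_of_ne f hab.symm, add_sub_right_comm] using
        (D.separated (D.step f a)).sub_add_ne_zero hab)
      (by simpa only [add_sub_cancel_right] using (D.separated f).sub_ne_zero hab)
      (by simpa only [add_sub_cancel_right] using (D.separated f).sub_sub_ne_zero hab)
    simp only [add_sub_cancel_right] at key
    simp only [factor_of_rel, factor_of_rel_swap, h, pos_step_self, pos_step_of_ne, ne_eq, hab,
      hab.symm, not_false_eq_true, mul_one, add_sub_add_right_eq_sub]
    simp only [← sub_sub, add_sub_right_comm _ κ₁]
    linear_combination -C * structureFun κ₁ κ₂ (D.pos f a - D.pos f b) * key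

theorem serreTerm_symmetrization (ha : a ∈ D.rows) (hb : b ∈ D.rows) (hc : c ∈ D.rows) :
    D.serreTerm m f a b c + D.serreTerm m f a c b + D.serreTerm m f b a c
      + D.serreTerm m f b c a + D.serreTerm m f c a b + D.serreTerm m f c b a = 0 := by
  have distinct {a b c : ι} :=
    D.serreTerm_symmetrization_of_rel h₁₂ h₂₃ f (a := a) (b := b) (c := c)
  have repeated {a b : ι} := D.serreTerm_symmetrization_repeat h₁₂ h₂₃ f (a := a) (b := b)
  rcases eq_or_ne a b with rfl | hab
  · rcases eq_or_ne a c with rfl | hac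
    · have hzero : D.serreTerm m f a a a = 0 := by
        simp only [serreTerm, pos_step_self]
        ring
      simp only [hzero, add_zero]
    · linear_combination 2 * repeated ha hc hac
  rcases eq_or_ne a c with rfl | hac
  · linear_combination 2 * repeated ha hb hab
  rcases eq_or_ne b c with rfl | hbc
  · linear_combination 2 * repeated hb ha hab.symm
  rcases (trichotomous_of r a b).imp_right (Or.resolve_left · hab) with rab | rba <;>
    rcases (trichotomous_of r b c).imp_right (Or.resolve_left · hbc) with rbc | rcb <;>
    rcases (trichotomous_of r a c).imp_right (Or.resolve_left · hac) with rac | rca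
  · linear_combination distinct ha hb hc rab rbc
  · exact absurd (_root_.trans rab rbc) (asymm rca)
  · linear_combination distinct ha hc hb rac rcb
  · linear_combination distinct hc ha hb rca rab
  · linear_combination distinct hb ha hc rba rac
  · linear_combination distinct hb hc ha rbc rca
  · exact absurd (_root_.trans rcb rba) (asymm rac)
  · linear_combination distinct hc hb ha rcb rba

theorem word₃_serre [CharZero K] :
    D.word₃ f (fun z w v => (z - 2 * w + v) * m z w v) = 0 := by
  refine sum_sum_sum_eq_zero_of_symmetrization _ _ fun a ha b hb c hc => ?_
  have hacb := D.step_comm (D.step f a) c b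
  have hbac := congrArg (D.step · c) (D.step_comm f b a)
  have hbca := (D.step_comm (D.step f b) c a).trans hbac
  have hcab := (congrArg (D.step · b) (D.step_comm f c a)).trans hacb
  have hcba := (D.step_comm (D.step f c) b a).trans hcab
  simp only [hacb, hbac, hbca, hcab, hcba, ← add_smul]
  exact (congrArg (· • _) (D.serreTerm_symmetrization h₁₂ h₂₃ f ha hb hc)).trans (zero_smul K _)

omit h₁₂ h₂₃ in
theorem serreRelation_op [CharZero K] : SerreRelation D.op := by
  intro i
  refine Finsupp.lhom_ext' fun f => LinearMap.ext_ring ?_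
  simp only [LinearMap.comp_apply, Finsupp.lsingle_apply, LinearMap.sum_apply,
    LinearMap.sub_apply, Module.End.mul_apply, map_sub, op_op_op_single]
  simp only [← map_sub, ← map_sum, LinearMap.zero_apply]
  rw [← D.word₃_serre (m := fun z w v => ∑ σ : Equiv.Perm (Fin 3),
    z ^ i (σ 0) * w ^ i (σ 1) * v ^ i (σ 2)) ?_ ?_ f]
  · congr 1
    funext z w v
    simp only [Finset.sum_apply, Pi.sub_apply]
    rw [sum_perm_fin_three fun a b c => z ^ i a * w ^ i b * v ^ i c,
      sum_perm_fin_three fun a b c => z ^ i a * w ^ i b * v ^ (i c + 1) -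
        z ^ i a * w ^ (i c + 1) * v ^ i b -
        (z ^ i b * w ^ (i c + 1) * v ^ i a - z ^ (i c + 1) * w ^ i b * v ^ i a)]
    ring
  · intro x y z
    simp only [sum_perm_fin_three fun a b c => x ^ i a * y ^ i b * z ^ i c,
      sum_perm_fin_three fun a b c => y ^ i a * x ^ i b * z ^ i c]
    ring
  · intro x y z
    simp only [sum_perm_fin_three fun a b c => x ^ i a * y ^ i b * z ^ i c,
      sum_perm_fin_three fun a b c => x ^ i a * z ^ i b * y ^ i c]
    ring

end Serre

end BoxMoves

section Eigenvalues

variable {ι K : Type*} [Field K] [DecidableEq ι] (κ₁ κ₂ c : K) (s : Finset ι)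

/-- The product of the structure functions over all rows but `i`, evaluated at `z`, together with
the factor of the empty rows beyond `s`, the first of which has position `c`. -/
def weight (x : ι → K) (i : ι) (z : K) : K :=
  (z - c + κ₁ + κ₂) / (z - c) * ∏ p ∈ s.erase i, structureFun κ₁ κ₂ (z - x p)

/-- The part of `weight` that involves neither row `a` nor row `i`. -/
def weightAway (x : ι → K) (a i : ι) (z : K) : K :=
  (z - c + κ₁ + κ₂) / (z - c) * ∏ p ∈ (s.erase i).erase a, structureFun κ₁ κ₂ (z - x p)

/-- The sum of the residues of `φ` times the product of the structure functions over all rows, at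
the poles `x i` and `x i - κ₁`, up to a constant factor. -/
def residueSum (x : ι → K) : (K → K) →ₗ[K] K where
  toFun φ := 1 / κ₁ ^ 2 * ∑ i ∈ s, (weight κ₁ κ₂ c s x i (x i) * φ (x i) -
    weight κ₁ κ₂ c s x i (x i - κ₁) * φ (x i - κ₁))
  map_add' φ φ' := by
    simp only [Pi.add_apply, Finset.mul_sum, ← Finset.sum_add_distrib]
    exact Finset.sum_congr rfl fun i _ => by ring
  map_smul' r φ := by
    simp only [Pi.smul_apply, smul_eq_mul, RingHom.id_apply, Finset.mul_sum]
    exact Finset.sum_congr rfl fun i _ => by ring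

/-- The eigenvalue of `ψ_k` on a state with row positions `x`. -/
def psiEigenvalue (k : ℕ) (x : ι → K) : K :=
  residueSum κ₁ κ₂ c s x fun z => z ^ k

variable {κ₁ κ₂ c s} {x : ι → K} {a i : ι}

theorem weight_update_self (y z : K) :
    weight κ₁ κ₂ c s (Function.update x i y) i z = weight κ₁ κ₂ c s x i z := by
  unfold weight
  congr 1
  refine Finset.prod_congr rfl fun p hp => ?_
  rw [Function.update_of_ne (Finset.ne_of_mem_erase hp)]

theorem weight_eq_weightAway_mul (ha : a ∈ s) (hia : i ≠ a) (z : K) :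
    weight κ₁ κ₂ c s x i z = weightAway κ₁ κ₂ c s x a i z * structureFun κ₁ κ₂ (z - x a) := by
  rw [weight, weightAway, ← Finset.mul_prod_erase _ _ (Finset.mem_erase.2 ⟨hia.symm, ha⟩)]
  ring

theorem weight_update_eq_weightAway_mul (ha : a ∈ s) (hia : i ≠ a) (y z : K) :
    weight κ₁ κ₂ c s (Function.update x a y) i z =
      weightAway κ₁ κ₂ c s x a i z * structureFun κ₁ κ₂ (z - y) := by
  rw [weight_eq_weightAway_mul ha hia, Function.update_self, weightAway, weightAway]
  congr 2
  refine Finset.prod_congr rfl fun p hp => ?_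
  rw [Function.update_of_ne (Finset.ne_of_mem_erase hp)]

theorem residueSum_update (hx : Separated κ₁ x) (ha : a ∈ s) (φ : K → K) :
    residueSum κ₁ κ₂ c s (Function.update x a (x a + κ₁))
        (fun z => (z - x a - κ₁) * (z - x a - κ₂) * (z - x a + κ₁ + κ₂) * φ z) =
      residueSum κ₁ κ₂ c s x
        (fun z => (z - x a + κ₁) * (z - x a + κ₂) * (z - x a - κ₁ - κ₂) * φ z) := by
  simp only [residueSum, LinearMap.coe_mk, AddHom.coe_mk]
  congr 1
  refine Finset.sum_congr rfl fun i _ => ?_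
  rcases eq_or_ne i a with rfl | hia
  · simp only [weight_update_self, Function.update_self, add_sub_cancel_right]
    ring
  · have hshift := structureFun_shift (κ₂ := κ₂) (hx.sub_ne_zero hia) (hx.sub_add_ne_zero hia)
      (hx.sub_sub_ne_zero hia)
    have hshift' := structureFun_shift (κ₁ := κ₁) (κ₂ := κ₂) (t := x i - κ₁ - x a)
      (by rw [sub_right_comm]; exact hx.sub_sub_ne_zero hia)
      (by rw [sub_right_comm, sub_add_cancel]; exact hx.sub_ne_zero hia)
      (by convert hx hia (-2) using 1; push_cast; ring)
    rw [Function.update_of_ne hia, weight_update_eq_weightAway_mul ha hia,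
      weight_update_eq_weightAway_mul ha hia, weight_eq_weightAway_mul ha hia,
      weight_eq_weightAway_mul ha hia, ← sub_sub, ← sub_sub]
    linear_combination weightAway κ₁ κ₂ c s x a i (x i) * φ (x i) * hshift -
      weightAway κ₁ κ₂ c s x a i (x i - κ₁) * φ (x i - κ₁) * hshift'

theorem residueSum_depressed_cubic (x : ι → K) (y q r : K) (k : ℕ) :
    residueSum κ₁ κ₂ c s x (fun z => ((z - y) ^ 3 + q * (z - y) + r) * z ^ k) =
      psiEigenvalue κ₁ κ₂ c s (k + 3) x - 3 * y * psiEigenvalue κ₁ κ₂ c s (k + 2) x +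
        (3 * y ^ 2 + q) * psiEigenvalue κ₁ κ₂ c s (k + 1) x +
        (r - y ^ 3 - q * y) * psiEigenvalue κ₁ κ₂ c s k x := by
  simp only [psiEigenvalue, ← smul_eq_mul (a := 3 * y), ← smul_eq_mul (a := 3 * y ^ 2 + q),
    ← smul_eq_mul (a := r - y ^ 3 - q * y), ← map_smul, ← map_sub, ← map_add]
  congr 1
  funext z
  simp only [Pi.add_apply, Pi.sub_apply, Pi.smul_apply, smul_eq_mul]
  ring

theorem psiEigenvalue_update (hx : Separated κ₁ x) (ha : a ∈ s) (k : ℕ) :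
    let y := x a
    let P := fun k => psiEigenvalue κ₁ κ₂ c s k (Function.update x a (y + κ₁))
    let Q := fun k => psiEigenvalue κ₁ κ₂ c s k x
    (P (k + 3) - Q (k + 3)) - 3 * y * (P (k + 2) - Q (k + 2)) +
      3 * y ^ 2 * (P (k + 1) - Q (k + 1)) - y ^ 3 * (P k - Q k) +
      (κ₁ * κ₂ + κ₁ * (-κ₁ - κ₂) + κ₂ * (-κ₁ - κ₂)) *
        ((P (k + 1) - Q (k + 1)) - y * (P k - Q k)) =
    (κ₁ * κ₂ * (-κ₁ - κ₂)) * (P k + Q k) := by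
  intro y P Q
  let σ₂ := κ₁ * κ₂ + κ₁ * (-κ₁ - κ₂) + κ₂ * (-κ₁ - κ₂)
  let σ₃ := κ₁ * κ₂ * (-κ₁ - κ₂)
  have hleft (z : K) : (z - y - κ₁) * (z - y - κ₂) * (z - y + κ₁ + κ₂) =
      (z - y) ^ 3 + σ₂ * (z - y) + -σ₃ := by ring
  have hright (z : K) : (z - y + κ₁) * (z - y + κ₂) * (z - y - κ₁ - κ₂) =
      (z - y) ^ 3 + σ₂ * (z - y) + σ₃ := by ring
  have h := residueSum_update (κ₂ := κ₂) (c := c) hx ha fun z => z ^ k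
  simp only [y, hleft, hright, residueSum_depressed_cubic] at h
  simp only [P, Q, y]
  linear_combination h

end Eigenvalues

section LowModes

open Polynomial

theorem eval_derivative_of_eq_mul {K : Type*} [CommRing K] {P R : K[X]} {v : K}
    (h : P = (X - C v) * R) : P.derivative.eval v = R.eval v := by
  simp [h]

theorem coeff_eq_sum_eval_div_eval_derivative_nodal {ι K : Type*} [Field K]
    {s : Finset ι} {v : ι → K} (hv : Set.InjOn v s) {P : K[X]} (hP : P.degree < s.card) :
    P.coeff (s.card - 1) =
      ∑ i ∈ s, P.eval (v i) / (Lagrange.nodal s v).derivative.eval (v i) := by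
  classical
  rw [Lagrange.coeff_eq_sum hv hP]
  refine Finset.sum_congr rfl fun i hi => ?_
  rw [Lagrange.eval_nodal_derivative_eval_node_eq hi, Lagrange.eval_nodal]

theorem structureFun_sub_structureFun {K : Type*} [Field K] {κ₁ κ₂ t : K} (ht : t ≠ 0)
    (htm : t - κ₁ ≠ 0) (htp : t + κ₁ ≠ 0) :
    structureFun κ₁ κ₂ (t - κ₁) - structureFun κ₁ κ₂ t =
      -2 * (κ₁ * κ₂ * (κ₁ + κ₂)) / (t * (t - κ₁) * (t + κ₁)) := by
  rw [structureFun_sub_eq_one_sub ht htm, structureFun_eq_one_sub ht htp]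
  field_simp
  ring

theorem prod_structureFun {ι K : Type*} [Field K] (κ₁ κ₂ : K) (s : Finset ι) (t : ι → K) :
    ∏ i ∈ s, structureFun κ₁ κ₂ (t i) =
      (∏ i ∈ s, (t i - κ₂) * (t i + κ₁ + κ₂)) / ∏ i ∈ s, t i * (t i + κ₁) :=
  Finset.prod_div_distrib ..

theorem Separated.injective {ι K : Type*} [Field K] [CharZero K] {κ : K} {x : ι → K}
    (hx : Separated κ x) (hκ : κ ≠ 0) :
    Function.Injective fun q : ι × ℤ => x q.1 + q.2 * κ := by
  rintro ⟨a, k⟩ ⟨b, l⟩ h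
  simp only at h
  obtain rfl : a = b := by
    by_contra hab
    refine hx hab (k - l) ?_
    push_cast
    linear_combination h
  simpa [hκ] using h

variable {ι K : Type*} [Field K] [DecidableEq ι] (κ₁ κ₂ c : K) (s : Finset ι) (x : ι → K) (a : ι)

/-- The numerator of the product of the structure functions over all rows but `a`. -/
def numeratorAway : K[X] :=
  (X - C (c - κ₁ - κ₂)) *
    ∏ p ∈ s.erase a, ((X - C (x p + κ₂)) * (X - C (x p - κ₁ - κ₂)))

/-- The denominator of the product of the structure functions over all rows but `i`, times the
pole created by moving row `a`. -/
def denominatorAway (i : ι) : K[X] :=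
  (X - C c) * (X - C (x a + κ₁)) * ∏ p ∈ s.erase i, ((X - C (x p)) * (X - C (x p - κ₁)))

theorem eval_numeratorAway (z : K) :
    (numeratorAway κ₁ κ₂ c s x a).eval z =
      (z - c + κ₁ + κ₂) * ∏ p ∈ s.erase a, (z - x p - κ₂) * (z - x p + κ₁ + κ₂) := by
  simp only [numeratorAway, eval_mul, eval_prod, eval_sub, eval_X, eval_C]
  congr 1
  · ring
  · exact Finset.prod_congr rfl fun p _ => by ring

theorem eval_denominatorAway (i : ι) (z : K) :
    (denominatorAway κ₁ c s x a i).eval z =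
      (z - c) * (z - x a - κ₁) * ∏ p ∈ s.erase i, (z - x p) * (z - x p + κ₁) := by
  simp only [denominatorAway, eval_mul, eval_prod, eval_sub, eval_X, eval_C, ← sub_sub, ← sub_add]

theorem monic_numeratorAway : (numeratorAway κ₁ κ₂ c s x a).Monic :=
  (monic_X_sub_C _).mul <| monic_prod_of_monic _ _ fun _ _ =>
    (monic_X_sub_C _).mul (monic_X_sub_C _)

variable {κ₁ κ₂ c s x a}

theorem natDegree_numeratorAway_add_one (ha : a ∈ s) :
    (numeratorAway κ₁ κ₂ c s x a).natDegree + 1 = 2 * s.card := by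
  have hm : ∀ p ∈ s.erase a, ((X - C (x p + κ₂)) * (X - C (x p - κ₁ - κ₂))).Monic :=
    fun _ _ => (monic_X_sub_C _).mul (monic_X_sub_C _)
  rw [numeratorAway, (monic_X_sub_C _).natDegree_mul (monic_prod_of_monic _ _ hm),
    natDegree_prod_of_monic _ _ hm]
  simp only [(monic_X_sub_C _).natDegree_mul (monic_X_sub_C _), natDegree_X_sub_C,
    Finset.sum_const, Finset.card_erase_of_mem ha, smul_eq_mul]
  have := Finset.card_pos.2 ⟨a, ha⟩
  omega

theorem weight_eq_div_denominatorAway {z : K} (hz : z - x a - κ₁ ≠ 0) :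
    weight κ₁ κ₂ c s x a z = (z - x a - κ₁) *
      ((numeratorAway κ₁ κ₂ c s x a).eval z / (denominatorAway κ₁ c s x a a).eval z) := by
  rw [weight, prod_structureFun, eval_numeratorAway, eval_denominatorAway]
  field_simp

theorem weight_update_sub_weight (hx : Separated κ₁ x) (ha : a ∈ s) {i : ι} (hi : i ∈ s)
    (hia : i ≠ a) {z : K} (hz : (z - x i) * (z - x i + κ₁) = 0) :
    weight κ₁ κ₂ c s (Function.update x a (x a + κ₁)) i z - weight κ₁ κ₂ c s x i z =
      2 * κ₁ * ((numeratorAway κ₁ κ₂ c s x a).eval z / (denominatorAway κ₁ c s x a i).eval z) := by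
  have hne : z - x a ≠ 0 ∧ z - x a - κ₁ ≠ 0 ∧ z - x a + κ₁ ≠ 0 := by
    rcases mul_eq_zero.1 hz with h | h
    · rw [sub_eq_zero.1 h]
      exact ⟨hx.sub_ne_zero hia, hx.sub_sub_ne_zero hia, hx.sub_add_ne_zero hia⟩
    · rw [show z = x i - κ₁ by linear_combination h, sub_right_comm]
      refine ⟨hx.sub_sub_ne_zero hia, ?_, by simpa using hx.sub_ne_zero hia⟩
      convert hx hia (-2) using 1
      push_cast
      ring
  obtain ⟨h0, hm, hp⟩ := hne
  have hnum : (z - x i - κ₂) * (z - x i + κ₁ + κ₂) = -(κ₂ * (κ₁ + κ₂)) := by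
    linear_combination hz
  rw [weight_update_eq_weightAway_mul ha hia, weight_eq_weightAway_mul ha hia, ← mul_sub,
    ← sub_sub, structureFun_sub_structureFun h0 hm hp, weightAway, prod_structureFun,
    eval_numeratorAway, eval_denominatorAway,
    ← Finset.mul_prod_erase _ _ (Finset.mem_erase.2 ⟨hia, hi⟩),
    ← Finset.mul_prod_erase _ _ (Finset.mem_erase.2 ⟨hia.symm, ha⟩), hnum,
    Finset.erase_right_comm]
  simp only [div_eq_mul_inv, mul_inv]
  ring

/-- The points at which the product of the structure functions, before or after moving row `a`, may
have a pole; `(p, k)` stands for `x p + k * κ₁`, and `b` for the first empty row. -/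
def poles (s : Finset ι) (a b : ι) : Finset (ι × ℤ) :=
  insert (b, 0) (insert (a, 1) (s ×ˢ {0, -1}))

variable {b : ι}

theorem sum_poles {M : Type*} [AddCommMonoid M] (hb : b ∉ s) (hab : a ≠ b) (F : ι × ℤ → M) :
    ∑ q ∈ poles s a b, F q = F (b, 0) + (F (a, 1) + ∑ i ∈ s, (F (i, 0) + F (i, -1))) := by
  rw [poles, Finset.sum_insert (by simp [hb, hab.symm]), Finset.sum_insert (by simp),
    Finset.sum_product]
  simp only [Finset.sum_pair (by decide : (0 : ℤ) ≠ -1)]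

theorem card_poles (hb : b ∉ s) (hab : a ≠ b) : (poles s a b).card = 2 * s.card + 2 := by
  rw [Finset.card_eq_sum_ones, sum_poles hb hab, Finset.sum_const, smul_eq_mul]
  ring

/-- The monic polynomial whose simple roots are the poles `x q.1 + q.2 * κ₁` for `q` in
`poles s a b`. -/
def commonDenominator (κ₁ : K) (s : Finset ι) (x : ι → K) (a b : ι) : K[X] :=
  (X - C (x b)) * (X - C (x a + κ₁)) * ∏ p ∈ s, ((X - C (x p)) * (X - C (x p - κ₁)))

theorem nodal_poles (hb : b ∉ s) (hab : a ≠ b) :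
    Lagrange.nodal (poles s a b) (fun q => x q.1 + q.2 * κ₁) =
      commonDenominator κ₁ s x a b := by
  rw [Lagrange.nodal, poles, Finset.prod_insert (by simp [hb, hab.symm]),
    Finset.prod_insert (by simp), Finset.prod_product, commonDenominator]
  simp only [Finset.prod_pair (by decide : (0 : ℤ) ≠ -1)]
  simp [mul_assoc, sub_eq_add_neg]

theorem commonDenominator_eq_mul {i : ι} (hi : i ∈ s) :
    commonDenominator κ₁ s x a b =
      (X - C (x i)) * ((X - C (x i - κ₁)) * denominatorAway κ₁ (x b) s x a i) := by
  rw [commonDenominator, denominatorAway, ← Finset.mul_prod_erase _ _ hi]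
  ring

theorem eval_derivative_commonDenominator {i : ι} (hi : i ∈ s) :
    (commonDenominator κ₁ s x a b).derivative.eval (x i) =
      κ₁ * (denominatorAway κ₁ (x b) s x a i).eval (x i) := by
  rw [eval_derivative_of_eq_mul (commonDenominator_eq_mul hi)]
  simp

theorem eval_derivative_commonDenominator_sub {i : ι} (hi : i ∈ s) :
    (commonDenominator κ₁ s x a b).derivative.eval (x i - κ₁) =
      -κ₁ * (denominatorAway κ₁ (x b) s x a i).eval (x i - κ₁) := by
  rw [eval_derivative_of_eq_mul ((commonDenominator_eq_mul hi).trans (mul_left_comm _ _ _))]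
  simp

theorem weight_pole_created (hκ : 2 * κ₁ ^ 2 ≠ 0) (ha : a ∈ s) :
    weight κ₁ κ₂ (x b) s x a (x a + κ₁) = 2 * κ₁ ^ 2 *
      ((numeratorAway κ₁ κ₂ (x b) s x a).eval (x a + κ₁) /
        (commonDenominator κ₁ s x a b).derivative.eval (x a + κ₁)) := by
  have hsplit : commonDenominator κ₁ s x a b = (X - C (x a + κ₁)) *
      ((X - C (x b)) * ∏ p ∈ s, ((X - C (x p)) * (X - C (x p - κ₁)))) := by
    rw [commonDenominator]
    ring
  have hderiv : (commonDenominator κ₁ s x a b).derivative.eval (x a + κ₁) = 2 * κ₁ ^ 2 *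
      ((x a + κ₁ - x b) * ∏ p ∈ s.erase a, (x a + κ₁ - x p) * (x a + κ₁ - x p + κ₁)) := by
    rw [eval_derivative_of_eq_mul hsplit]
    simp only [eval_mul, eval_prod, eval_sub, eval_X, eval_C, ← Finset.mul_prod_erase s _ ha,
      ← sub_add]
    ring
  rw [hderiv, mul_div_assoc', mul_div_mul_left _ _ hκ, weight, prod_structureFun,
    eval_numeratorAway, div_mul_div_comm]

theorem residueSum_update_sub [CharZero K] (hκ : κ₁ ≠ 0) (hx : Separated κ₁ x) (ha : a ∈ s)
    (φ : K → K) :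
    let ρ := fun z => (numeratorAway κ₁ κ₂ (x b) s x a).eval z * φ z /
      (commonDenominator κ₁ s x a b).derivative.eval z
    residueSum κ₁ κ₂ (x b) s (Function.update x a (x a + κ₁)) φ
        - residueSum κ₁ κ₂ (x b) s x φ =
      2 * (ρ (x a + κ₁) + ∑ i ∈ s, (ρ (x i) + ρ (x i - κ₁))) := by
  intro ρ
  simp only [residueSum, LinearMap.coe_mk, AddHom.coe_mk]
  rw [← mul_sub, ← Finset.sum_sub_distrib, ← Finset.add_sum_erase _ _ ha,
    ← Finset.add_sum_erase s (fun i => ρ _ + _) ha, ← add_assoc, mul_add, mul_add 2]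
  congr 1
  · have hw := weight_eq_div_denominatorAway (κ₁ := κ₁) (κ₂ := κ₂) (c := x b) (s := s) (x := x)
      (a := a) (z := x a) (by simpa using hκ)
    have hw' := weight_eq_div_denominatorAway (κ₁ := κ₁) (κ₂ := κ₂) (c := x b) (s := s) (x := x)
      (a := a) (z := x a - κ₁) (by
        rw [show x a - κ₁ - x a - κ₁ = -2 * κ₁ by ring]
        exact mul_ne_zero (by norm_num) hκ)
    simp only [ρ, weight_update_self, Function.update_self, add_sub_cancel_right,
      weight_pole_created (b := b) (mul_ne_zero two_ne_zero (pow_ne_zero 2 hκ)) ha, hw, hw',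
      eval_derivative_commonDenominator ha, eval_derivative_commonDenominator_sub ha]
    field_simp
    ring
  · rw [Finset.mul_sum, Finset.mul_sum]
    refine Finset.sum_congr rfl fun i hi => ?_
    have his := Finset.mem_of_mem_erase hi
    have hia := Finset.ne_of_mem_erase hi
    have hw := weight_update_sub_weight (κ₂ := κ₂) (c := x b) hx ha his hia (z := x i) (by simp)
    have hw' := weight_update_sub_weight (κ₂ := κ₂) (c := x b) hx ha his hia (z := x i - κ₁)
      (by simp)
    simp only [ρ, Function.update_of_ne hia, eval_derivative_commonDenominator his,
      eval_derivative_commonDenominator_sub his]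
    rw [sub_sub_sub_comm, ← sub_mul, ← sub_mul, hw, hw']
    field_simp
    ring

theorem psiEigenvalue_update_sub [CharZero K] (hκ : κ₁ ≠ 0) (hx : Separated κ₁ x) (ha : a ∈ s)
    (hb : b ∉ s) {e : ι} (he : e ∈ s.erase a) (heb : x e + κ₂ = x b) {k : ℕ} (hk : k ≤ 2) :
    psiEigenvalue κ₁ κ₂ (x b) s k (Function.update x a (x a + κ₁))
        - psiEigenvalue κ₁ κ₂ (x b) s k x =
      2 * (numeratorAway κ₁ κ₂ (x b) s x a * X ^ k).coeff (2 * s.card + 1) := by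
  have hab : a ≠ b := ne_of_mem_of_not_mem ha hb
  have hmonic := monic_numeratorAway κ₁ κ₂ (x b) s x a
  have hdeg : (numeratorAway κ₁ κ₂ (x b) s x a * X ^ k).degree <
      ((poles s a b).card : WithBot ℕ) := by
    rw [← natDegree_lt_iff_degree_lt (hmonic.mul (monic_X_pow k)).ne_zero,
      hmonic.natDegree_mul (monic_X_pow k), natDegree_X_pow, card_poles hb hab]
    have := natDegree_numeratorAway_add_one (κ₁ := κ₁) (κ₂ := κ₂) (c := x b) (x := x) ha
    omega
  have hboundary : (numeratorAway κ₁ κ₂ (x b) s x a).eval (x b) = 0 := by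
    rw [eval_numeratorAway, Finset.prod_eq_zero he (by rw [← heb]; ring), mul_zero]
  have hcoeff := coeff_eq_sum_eval_div_eval_derivative_nodal ((hx.injective hκ).injOn) hdeg
  rw [nodal_poles hb hab, sum_poles hb hab, card_poles hb hab] at hcoeff
  rw [psiEigenvalue, psiEigenvalue, residueSum_update_sub hκ hx ha,
    show 2 * s.card + 1 = 2 * s.card + 2 - 1 from rfl, hcoeff]
  simp [hboundary, ← sub_eq_add_neg]

theorem psiEigenvalue_update_sub_eq_ite [CharZero K] (hκ : κ₁ ≠ 0) (hx : Separated κ₁ x)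
    (ha : a ∈ s) (hb : b ∉ s) {e : ι} (he : e ∈ s.erase a) (heb : x e + κ₂ = x b) {k : ℕ}
    (hk : k ≤ 2) :
    psiEigenvalue κ₁ κ₂ (x b) s k (Function.update x a (x a + κ₁))
        - psiEigenvalue κ₁ κ₂ (x b) s k x = if k = 2 then 2 else 0 := by
  have hdeg := natDegree_numeratorAway_add_one (κ₁ := κ₁) (κ₂ := κ₂) (c := x b) (x := x) ha
  rw [psiEigenvalue_update_sub hκ hx ha hb he heb hk, coeff_mul_X_pow', if_pos (by omega)]
  split_ifs with h
  · rw [show 2 * s.card + 1 - k = (numeratorAway κ₁ κ₂ (x b) s x a).natDegree by omega,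
      (monic_numeratorAway κ₁ κ₂ (x b) s x a).coeff_natDegree, mul_one]
  · rw [coeff_eq_zero_of_natDegree_lt (by omega), mul_zero]

end LowModes

section Diagonal

variable {X K : Type*} [Field K]

/-- The operator on the free vector space over `X` that multiplies the basis vector `f` by `v f`. -/
def diagonal (v : X → K) : Module.End K (X →₀ K) :=
  Finsupp.lsum K fun f => v f • Finsupp.lsingle f

theorem diagonal_single (v : X → K) (f : X) (c : K) :
    diagonal v (Finsupp.single f c) = Finsupp.single f (v f * c) := by
  simp [diagonal, -Finsupp.single_mul]

theorem commute_diagonal (v w : X → K) : Commute (diagonal v) (diagonal w) := by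
  refine Finsupp.lhom_ext' fun f => LinearMap.ext_ring ?_
  simp only [LinearMap.comp_apply, Finsupp.lsingle_apply, Module.End.mul_apply, diagonal_single,
    mul_left_comm]

variable {ι : Type*} {r : ι → ι → Prop} [DecidableRel r] {κ₁ κ₂ : K}

theorem diagonal_mul_op_sub_apply_single (D : BoxMoves X r κ₁ κ₂) (v : X → K) (j : ℕ) (f : X) :
    (diagonal v * D.op j - D.op j * diagonal v) (Finsupp.single f 1) =
      ∑ a ∈ D.rows, Finsupp.single (D.step f a)
        ((v (D.step f a) - v f) * (D.coef f a * D.pos f a ^ j)) := by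
  simp only [LinearMap.sub_apply, Module.End.mul_apply, D.op_single, diagonal_single, map_sum,
    ← Finset.sum_sub_distrib, ← Finsupp.single_sub]
  refine Finset.sum_congr rfl fun a _ => congrArg _ ?_
  ring

theorem diagonal_mul_op_sub_eq_smul (D : BoxMoves X r κ₁ κ₂) {v : X → K} {f : X} {c : K}
    (h : ∀ a ∈ D.rows, D.coef f a ≠ 0 → v (D.step f a) - v f = c) (j : ℕ) :
    (diagonal v * D.op j - D.op j * diagonal v) (Finsupp.single f 1) =
      (c • D.op j) (Finsupp.single f 1) := by
  rw [diagonal_mul_op_sub_apply_single, LinearMap.smul_apply, D.op_single, Finset.smul_sum]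
  refine Finset.sum_congr rfl fun a ha => ?_
  rw [Finsupp.smul_single, one_mul, smul_eq_mul]
  rcases eq_or_ne (D.coef f a) 0 with h0 | h0
  · rw [h0, zero_mul, mul_zero, mul_zero]
  · rw [h a ha h0]

theorem cubicExchange_diagonal_op (D : BoxMoves X r κ₁ κ₂) {v : ℕ → X → K} {σ₂ σ₃ : K}
    (h : ∀ f, ∀ a ∈ D.rows, ∀ k,
      let y := D.pos f a
      let P := fun k => v k (D.step f a)
      let Q := fun k => v k f
      (P (k + 3) - Q (k + 3)) - 3 * y * (P (k + 2) - Q (k + 2)) +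
        3 * y ^ 2 * (P (k + 1) - Q (k + 1)) - y ^ 3 * (P k - Q k) +
        σ₂ * ((P (k + 1) - Q (k + 1)) - y * (P k - Q k)) = σ₃ * (P k + Q k)) :
    CubicExchange σ₂ σ₃ (fun k => diagonal (v k)) D.op := by
  intro i j
  refine Finsupp.lhom_ext' fun f => LinearMap.ext_ring ?_
  simp only [LinearMap.comp_apply, Finsupp.lsingle_apply, LinearMap.sub_apply, LinearMap.add_apply,
    LinearMap.smul_apply, Module.End.mul_apply, D.op_single, diagonal_single, map_sum,
    Finset.smul_sum, Finsupp.smul_single, ← Finset.sum_sub_distrib, ← Finset.sum_add_distrib,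
    ← Finsupp.single_sub, ← Finsupp.single_add]
  refine Finset.sum_congr rfl fun a ha => congrArg _ ?_
  simp only [smul_eq_mul, nsmul_eq_mul]
  push_cast
  linear_combination D.coef f a * D.pos f a ^ j * h f a ha i

end Diagonal

section Lattice

variable {K : Type*} [Field K]

/-- The parameters `h1`, `h2` satisfy no nontrivial integral linear relation. -/
def Generic (h1 h2 : K) : Prop :=
  ∀ a b : ℤ, ¬(a = 0 ∧ b = 0) → (a : K) * h1 + (b : K) * h2 ≠ 0

/-- The position of the first free box in row `i` of the diagram with row lengths `f`, which need
not be decreasing or nonnegative. -/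
def rowPos (h1 h2 u : K) (f : ℕ → ℤ) (i : ℕ) : K := f i * h1 + i * h2 + u

theorem rowPos_add_single (h1 h2 u : K) (f : ℕ → ℤ) (a : ℕ) :
    rowPos h1 h2 u (f + Pi.single a 1) =
      Function.update (rowPos h1 h2 u f) a (rowPos h1 h2 u f a + h1) := by
  funext i
  rcases eq_or_ne i a with rfl | h
  · simp only [rowPos, Pi.add_apply, Pi.single_eq_same, Function.update_self]
    push_cast
    ring
  · simp [rowPos, h]

theorem rowPos_sub_single_self (h1 h2 u : K) (f : ℕ → ℤ) (a : ℕ) :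
    rowPos h1 h2 u (f - Pi.single a 1) a = rowPos h1 h2 u f a - h1 := by
  simp only [rowPos, Pi.sub_apply, Pi.single_eq_same]
  push_cast
  ring

theorem rowPos_sub_single_of_ne (h1 h2 u : K) (f : ℕ → ℤ) {a b : ℕ} (h : b ≠ a) :
    rowPos h1 h2 u (f - Pi.single a 1) b = rowPos h1 h2 u f b := by
  simp [rowPos, h]

variable {h1 h2 : K}

theorem Generic.separated_rowPos (h : Generic h1 h2) (u : K) (f : ℕ → ℤ) :
    Separated h1 (rowPos h1 h2 u f) := by
  intro a b hab k
  convert h (f a - f b + k) (a - b) (by omega) using 1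
  simp only [rowPos]
  push_cast
  ring

theorem Generic.left_ne_zero (h : Generic h1 h2) : h1 ≠ 0 := by
  simpa using h 1 0 (by simp)

theorem Generic.charZero (h : Generic h1 h2) : CharZero K :=
  charZero_of_inj_zero fun n hn => by
    by_contra hne
    exact h n 0 (by simpa using hne) (by simp [hn])

/-- The moves that add a box to one of the first `N` rows. -/
def up (h : Generic h1 h2) (u : K) (N : ℕ) : BoxMoves (ℕ → ℤ) (· < · : ℕ → ℕ → Prop) h1 h2 where
  rows := Finset.range N
  step f i := f + Pi.single i 1
  pos := rowPos h1 h2 u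
  own _ _ := 1 / h1
  step_comm f a b := add_right_comm f _ _
  pos_step_self f a := by rw [rowPos_add_single, Function.update_self]
  pos_step_of_ne f a b hab := by rw [rowPos_add_single, Function.update_of_ne hab]
  own_step_of_ne _ _ _ _ := rfl
  separated := h.separated_rowPos u

/-- The moves that remove a box from one of the first `N` rows. The product over the rows below
the given one is infinite; its part beyond the first `N` rows telescopes and is included in
`own`. -/
def down (h : Generic h1 h2) (u : K) (N : ℕ) :
    BoxMoves (ℕ → ℤ) (· > · : ℕ → ℕ → Prop) (-h1) (-h2) where
  rows := Finset.range N
  step f i := f - Pi.single i 1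
  pos f i := rowPos h1 h2 u f i - h1
  own f i := -(1 / h1) *
    ((N * h2 + u - h2 - rowPos h1 h2 u f i) / (N * h2 + u - rowPos h1 h2 u f i + h1))
  step_comm f a b := sub_right_comm f _ _
  pos_step_self f a := by rw [rowPos_sub_single_self]; ring
  pos_step_of_ne f a b hab := by rw [rowPos_sub_single_of_ne _ _ _ _ hab]
  own_step_of_ne f a b hab := by rw [rowPos_sub_single_of_ne _ _ _ _ hab]
  separated f a b hab k := by
    convert h.separated_rowPos u f hab (-k) using 1
    push_cast
    ring

variable (h : Generic h1 h2) (u : K) (N : ℕ) (f : ℕ → ℤ)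

theorem up_step_down_step (a : ℕ) : (up h u N).step ((down h u N).step f a) a = f :=
  sub_add_cancel f _

theorem down_step_up_step (a : ℕ) : (down h u N).step ((up h u N).step f a) a = f :=
  add_sub_cancel_right f _

theorem down_step_up_step_comm (a b : ℕ) :
    (down h u N).step ((up h u N).step f a) b = (up h u N).step ((down h u N).step f b) a :=
  add_sub_right_comm f _ _

theorem down_factor_eq_up_factor (a b : ℕ) :
    (down h u N).factor f a b = (up h u N).factor f b a := by
  refine if_congr Iff.rfl ?_ rfl
  rw [← structureFun_neg, neg_neg, neg_neg]
  congr 1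
  simp only [down, up]
  ring

theorem factor_down_step_eq_factor_up_step {a b : ℕ} (hab : a ≠ b) :
    (up h u N).factor ((down h u N).step f b) b a =
      (up h u N).factor ((up h u N).step f a) b a := by
  refine if_congr Iff.rfl (congrArg _ ?_) rfl
  rw [(up h u N).pos_step_self, (up h u N).pos_step_of_ne f hab.symm]
  simp only [up, down, rowPos_sub_single_self, rowPos_sub_single_of_ne _ _ _ _ hab]
  ring

theorem coef_down_mul_coef_up {a b : ℕ} (ha : a < N) (hb : b < N) (hab : a ≠ b) :
    (down h u N).coef f b * (up h u N).coef ((down h u N).step f b) a =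
      (up h u N).coef f a * (down h u N).coef ((up h u N).step f a) b := by
  have hup := (up h u N).coefAway_step ((down h u N).step f b) (Finset.mem_singleton_self b) hab
  have hdown := (down h u N).coefAway_step ((up h u N).step f a) (Finset.mem_singleton_self a)
    hab.symm
  rw [up_step_down_step] at hup
  rw [down_step_up_step] at hdown
  rw [(up h u N).coef_eq_coefAway_mul _ a (Finset.mem_range.2 hb),
    (up h u N).coef_eq_coefAway_mul _ a (Finset.mem_range.2 hb),
    (down h u N).coef_eq_coefAway_mul _ b (Finset.mem_range.2 ha),
    (down h u N).coef_eq_coefAway_mul _ b (Finset.mem_range.2 ha), hup, hdown,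
    down_factor_eq_up_factor, down_factor_eq_up_factor,
    factor_down_step_eq_factor_up_step h u N f hab]
  ring

theorem factor_up_mul_factor_down {p i : ℕ} (hpi : p ≠ i) :
    (up h u N).factor f p i * (down h u N).factor ((up h u N).step f i) p i =
      structureFun h1 h2 (rowPos h1 h2 u f i - rowPos h1 h2 u f p) := by
  rw [down_factor_eq_up_factor]
  rcases lt_or_gt_of_ne hpi with hlt | hgt
  · rw [BoxMoves.factor_of_rel _ _ hlt, BoxMoves.factor_of_rel_swap _ _ hlt, mul_one]
    rfl
  · rw [BoxMoves.factor_of_rel_swap _ _ hgt, BoxMoves.factor_of_rel _ _ hgt, one_mul,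
      BoxMoves.pos_step_self, BoxMoves.pos_step_of_ne _ _ hpi, ← structureFun_reflect]
    congr 1
    simp only [up]
    ring

theorem coef_up_mul_coef_down {i : ℕ} (hi : i < N) :
    (up h u N).coef f i * (down h u N).coef ((up h u N).step f i) i =
      -(1 / h1 ^ 2) * weight h1 h2 (N * h2 + u) (Finset.range N) (rowPos h1 h2 u f) i
        (rowPos h1 h2 u f i) := by
  have hown : (down h u N).own ((up h u N).step f i) i =
      -(1 / h1) * ((rowPos h1 h2 u f i - (N * h2 + u) + h1 + h2) /
        (rowPos h1 h2 u f i - (N * h2 + u))) := by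
    simp only [down, up, rowPos_add_single, Function.update_self]
    refine congrArg (-(1 / h1) * ·) ?_
    rw [← neg_div_neg_eq]
    congr 1 <;> ring
  have hself (g : ℕ → ℤ) : (up h u N).factor g i i = 1 := if_neg (lt_irrefl i)
  have hi' : i ∈ Finset.range N := Finset.mem_range.2 hi
  rw [weight, ← Finset.prod_congr rfl fun p hp =>
    factor_up_mul_factor_down h u N f (Finset.ne_of_mem_erase hp), Finset.prod_mul_distrib,
    BoxMoves.coef, BoxMoves.coef, hown, show (up h u N).rows = Finset.range N from rfl,
    show (down h u N).rows = Finset.range N from rfl, ← Finset.mul_prod_erase _ _ hi',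
    ← Finset.mul_prod_erase _ _ hi', down_factor_eq_up_factor, hself, hself,
    show (up h u N).own f i = 1 / h1 from rfl]
  ring

theorem coef_down_mul_coef_up_self {i : ℕ} (hi : i < N) :
    (down h u N).coef f i * (up h u N).coef ((down h u N).step f i) i =
      -(1 / h1 ^ 2) * weight h1 h2 (N * h2 + u) (Finset.range N) (rowPos h1 h2 u f) i
        (rowPos h1 h2 u f i - h1) := by
  have hpos := rowPos_add_single h1 h2 u ((down h u N).step f i) i
  have hdown := coef_up_mul_coef_down h u N ((down h u N).step f i) hi
  rw [up_step_down_step] at hdown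
  rw [show (down h u N).step f i + Pi.single i 1 = f from up_step_down_step h u N f i] at hpos
  rw [mul_comm, hdown, hpos, weight_update_self, Function.update_self, add_sub_cancel_right]

/-- The operator on the lattice that corresponds to `ψ_k`. -/
def psiDiag (h1 h2 u : K) (N k : ℕ) : Module.End K ((ℕ → ℤ) →₀ K) :=
  diagonal fun f => psiEigenvalue h1 h2 (N * h2 + u) (Finset.range N) k (rowPos h1 h2 u f)

theorem up_op_mul_down_op_sub (i j : ℕ) :
    (up h u N).op i * (down h u N).op j - (down h u N).op j * (up h u N).op i =
      psiDiag h1 h2 u N (i + j) := by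
  refine Finsupp.lhom_ext' fun f => LinearMap.ext_ring ?_
  simp only [LinearMap.comp_apply, Finsupp.lsingle_apply, LinearMap.sub_apply,
    Module.End.mul_apply, BoxMoves.op_single, map_sum, one_mul, psiDiag, diagonal_single, mul_one]
  rw [show (up h u N).rows = Finset.range N from rfl,
    show (down h u N).rows = Finset.range N from rfl]
  conv_lhs => arg 2; rw [Finset.sum_comm]
  rw [← Finset.sum_sub_distrib, psiEigenvalue, residueSum]
  simp only [LinearMap.coe_mk, AddHom.coe_mk]
  rw [Finset.mul_sum, Finsupp.single_finsetSum]
  refine Finset.sum_congr rfl fun b hb => ?_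
  rw [Finset.mem_range] at hb
  rw [← Finset.sum_sub_distrib, Finset.sum_eq_single_of_mem b (Finset.mem_range.2 hb)]
  · rw [up_step_down_step, down_step_up_step, ← Finsupp.single_sub]
    congr 1
    have hup : (up h u N).pos ((down h u N).step f b) b = rowPos h1 h2 u f b - h1 :=
      rowPos_sub_single_self ..
    have hdown : (down h u N).pos ((up h u N).step f b) b = rowPos h1 h2 u f b := by
      simp [down, up, rowPos_add_single]
    rw [hup, hdown, show (down h u N).pos f b = rowPos h1 h2 u f b - h1 from rfl,
      show (up h u N).pos f b = rowPos h1 h2 u f b from rfl, pow_add, pow_add]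
    linear_combination
      (rowPos h1 h2 u f b - h1) ^ i * (rowPos h1 h2 u f b - h1) ^ j *
        coef_down_mul_coef_up_self h u N f hb -
      rowPos h1 h2 u f b ^ i * rowPos h1 h2 u f b ^ j * coef_up_mul_coef_down h u N f hb
  · intro a ha hab
    have hup : (up h u N).pos ((down h u N).step f b) a = (up h u N).pos f a :=
      rowPos_sub_single_of_ne _ _ _ _ hab
    have hdown : (down h u N).pos ((up h u N).step f a) b = (down h u N).pos f b := by
      simp [down, up, rowPos_add_single, hab.symm]
    rw [down_step_up_step_comm, ← Finsupp.single_sub, hup, hdown, Finsupp.single_eq_zero]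
    linear_combination (down h u N).pos f b ^ j * (up h u N).pos f a ^ i *
      coef_down_mul_coef_up h u N f (Finset.mem_range.1 ha) hb hab

end Lattice

section LatticeRelations

variable {K : Type*} [Field K] {h1 h2 : K} (h : Generic h1 h2) (u : K) (N : ℕ)

theorem cubicExchange_down_op :
    CubicExchange (h1 * h2 + h1 * (-h1 - h2) + h2 * (-h1 - h2)) (-(h1 * h2 * (-h1 - h2)))
      (down h u N).op (down h u N).op := by
  have := h.charZero
  convert (down h u N).cubicExchange_op using 1 <;> ring

theorem cubicExchange_psiDiag_up_op :
    CubicExchange (h1 * h2 + h1 * (-h1 - h2) + h2 * (-h1 - h2)) (h1 * h2 * (-h1 - h2))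
      (psiDiag h1 h2 u N) (up h u N).op := by
  refine cubicExchange_diagonal_op _ fun f a ha k => ?_
  have hupdate := psiEigenvalue_update (κ₂ := h2) (c := N * h2 + u) (s := Finset.range N)
    (h.separated_rowPos u f) ha k
  dsimp only at hupdate
  rwa [← rowPos_add_single] at hupdate

theorem cubicExchange_psiDiag_down_op :
    CubicExchange (h1 * h2 + h1 * (-h1 - h2) + h2 * (-h1 - h2)) (-(h1 * h2 * (-h1 - h2)))
      (psiDiag h1 h2 u N) (down h u N).op := by
  refine cubicExchange_diagonal_op _ fun f a ha k => ?_
  have hupdate := psiEigenvalue_update (κ₂ := h2) (c := N * h2 + u) (s := Finset.range N)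
    (h.separated_rowPos u ((down h u N).step f a)) ha k
  have hpos : rowPos h1 h2 u ((down h u N).step f a) a = (down h u N).pos f a :=
    rowPos_sub_single_self ..
  dsimp only at hupdate ⊢
  rw [← rowPos_add_single, show (down h u N).step f a + Pi.single a 1 = f from
    up_step_down_step h u N f a, hpos] at hupdate
  linear_combination -hupdate

variable {N} {f : ℕ → ℤ}

theorem coef_up_eq_zero {p : ℕ} (hp : p + 1 < N) (hf : f (p + 1) = f p) :
    (up h u N).coef f (p + 1) = 0 := by
  refine mul_eq_zero_of_right _ (Finset.prod_eq_zero (Finset.mem_range.2 (Nat.lt_of_succ_lt hp)) ?_)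
  rw [BoxMoves.factor_of_rel _ _ (Nat.lt_succ_self p), structureFun,
    show (up h u N).pos = rowPos h1 h2 u from rfl, rowPos, rowPos, hf, Nat.cast_succ]
  ring

theorem coef_down_eq_zero {p : ℕ} (hp : p + 1 < N) (hf : f (p + 1) = f p) :
    (down h u N).coef f p = 0 := by
  refine mul_eq_zero_of_right _ (Finset.prod_eq_zero (Finset.mem_range.2 hp) ?_)
  rw [down_factor_eq_up_factor, BoxMoves.factor_of_rel _ _ (Nat.lt_succ_self p), structureFun,
    show (up h u N).pos = rowPos h1 h2 u from rfl, rowPos, rowPos, hf, Nat.cast_succ]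
  ring

theorem coef_down_last_eq_zero {p : ℕ} (hf : f p = 0) : (down h u (p + 1)).coef f p = 0 := by
  refine mul_eq_zero_of_left ?_ _
  simp only [down, rowPos, hf]
  push_cast
  ring

include h in
theorem psiEigenvalue_add_single_sub {p a : ℕ} (hf : f p = 0) (hf' : f (p + 1) = 0) (ha : a < p)
    {k : ℕ} (hk : k ≤ 2) :
    psiEigenvalue h1 h2 ((p + 1 : ℕ) * h2 + u) (Finset.range (p + 1)) k
        (rowPos h1 h2 u (f + Pi.single a 1)) -
      psiEigenvalue h1 h2 ((p + 1 : ℕ) * h2 + u) (Finset.range (p + 1)) k (rowPos h1 h2 u f) =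
        if k = 2 then 2 else 0 := by
  have := h.charZero
  have hpos : rowPos h1 h2 u f (p + 1) = (p + 1 : ℕ) * h2 + u := by simp [rowPos, hf']
  rw [← hpos, rowPos_add_single]
  refine psiEigenvalue_update_sub_eq_ite h.left_ne_zero (h.separated_rowPos u f)
    (Finset.mem_range.2 (ha.trans (Nat.lt_succ_self p))) Finset.notMem_range_self
    (Finset.mem_erase.2 ⟨ha.ne', Finset.self_mem_range_succ p⟩) ?_ hk
  simp only [rowPos, hf, hf']
  push_cast
  ring

theorem psiDiag_mul_up_op_sub_apply_single {p : ℕ} (hp : f p = 0) (hp1 : f (p + 1) = 0)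
    (hp2 : f (p + 2) = 0) {k : ℕ} (hk : k ≤ 2) (j : ℕ) :
    (psiDiag h1 h2 u (p + 2) k * (up h u (p + 2)).op j -
        (up h u (p + 2)).op j * psiDiag h1 h2 u (p + 2) k) (Finsupp.single f 1) =
      ((if k = 2 then 2 else 0 : K) • (up h u (p + 2)).op j) (Finsupp.single f 1) := by
  refine diagonal_mul_op_sub_eq_smul _ (fun a ha hcoef => ?_) j
  have hne : a ≠ p + 1 := by
    rintro rfl
    exact hcoef (coef_up_eq_zero h u (Nat.lt_succ_self _) (hp1.trans hp.symm))
  have hlt : a < p + 1 := lt_of_le_of_ne (Nat.lt_succ_iff.1 (Finset.mem_range.1 ha)) hne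
  exact psiEigenvalue_add_single_sub h u hp1 hp2 hlt hk

theorem psiDiag_mul_down_op_sub_apply_single {p : ℕ} (hp : f p = 0) (hp1 : f (p + 1) = 0)
    {k : ℕ} (hk : k ≤ 2) (j : ℕ) :
    (psiDiag h1 h2 u (p + 1) k * (down h u (p + 1)).op j -
        (down h u (p + 1)).op j * psiDiag h1 h2 u (p + 1) k) (Finsupp.single f 1) =
      (-(if k = 2 then 2 else 0 : K) • (down h u (p + 1)).op j) (Finsupp.single f 1) := by
  refine diagonal_mul_op_sub_eq_smul _ (fun a ha hcoef => ?_) j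
  have hne : a ≠ p := by
    rintro rfl
    exact hcoef (coef_down_last_eq_zero h u hp)
  have hlt : a < p := lt_of_le_of_ne (Nat.lt_succ_iff.1 (Finset.mem_range.1 ha)) hne
  have hstep (q : ℕ) (hq : p ≤ q) : (down h u (p + 1)).step f a q = f q := by
    simp [down, (hlt.trans_le hq).ne']
  have hsub := psiEigenvalue_add_single_sub h u ((hstep p le_rfl).trans hp)
    ((hstep (p + 1) p.le_succ).trans hp1) hlt hk
  rw [show (down h u (p + 1)).step f a + Pi.single a 1 = f from
    up_step_down_step h u (p + 1) f a] at hsub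
  rw [← hsub, neg_sub]

end LatticeRelations

section RemovalCoefficient

variable {K : Type*} [Field K]

/-- The factor with index `p` of the telescoping product in the coefficient with which a box is
removed from row `i`, as a function of the row positions `x`. -/
def removalFactor (h1 h2 : K) (x : ℕ → K) (i p : ℕ) : K :=
  ((x p - x i + h1 + h2) * (x (p + 1) - x i - h2)) / ((x (p + 1) - x i + h1) * (x p - x i))

theorem mul_prod_removalFactor (h1 h2 : K) (x : ℕ → K) {i N : ℕ} (hi : i < N) :
    (x (i + 1) - x i - h2) / (x (i + 1) - x i + h1) *
        ∏ p ∈ Finset.Ico (i + 1) N, removalFactor h1 h2 x i p =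
      (x N - x i - h2) / (x N - x i + h1) *
        ∏ p ∈ Finset.Ico (i + 1) N, structureFun h1 h2 (x p - x i) := by
  induction N, hi using Nat.le_induction with
  | base => simp
  | succ n hn ih =>
    rw [Finset.prod_Ico_succ_top hn, Finset.prod_Ico_succ_top hn, ← mul_assoc, ih, removalFactor,
      structureFun]
    simp only [div_eq_mul_inv, mul_inv]
    ring

theorem removalFactor_eq_one {h1 h2 : K} {x : ℕ → K} (hx : Separated h1 x) {i p : ℕ} (hip : i < p)
    (hp : x (p + 1) = x p + h2) : removalFactor h1 h2 x i p = 1 := by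
  have hne := hx.sub_ne_zero hip.ne'
  have hne' := hx.sub_add_ne_zero (hip.trans p.lt_succ_self).ne'
  rw [removalFactor, div_eq_one_iff_eq (mul_ne_zero hne' hne), hp]
  ring

variable {h1 h2 : K} (h : Generic h1 h2) (u : K)

theorem coef_down_eq_mul_prod_removalFactor {f : ℕ → ℤ} {i N : ℕ} (hi : i < N) (hf : f N = 0) :
    let x := rowPos h1 h2 u f
    (down h u N).coef f i = -(1 / h1) * ((x (i + 1) - x i - h2) / (x (i + 1) - x i + h1) *
      ∏ p ∈ Finset.Ico (i + 1) N, removalFactor h1 h2 x i p) := by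
  intro x
  have hrange : Finset.Ico (i + 1) N = (Finset.range N).filter (i < ·) := by
    ext p
    simp only [Finset.mem_Ico, Finset.mem_range, Finset.mem_filter]
    omega
  have hN : N * h2 + u = x N := by simp [x, rowPos, hf]
  have hown : (down h u N).own f i = -(1 / h1) * ((x N - x i - h2) / (x N - x i + h1)) := by
    rw [← hN, sub_right_comm]
    rfl
  rw [mul_prod_removalFactor h1 h2 x hi, BoxMoves.coef, hown, mul_assoc, hrange,
    Finset.prod_filter]
  congr 2
  exact Finset.prod_congr rfl fun p _ => down_factor_eq_up_factor h u N f p i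

end RemovalCoefficient

section Transfer

variable {K A B C : Type*} [CommRing K] [Ring A] [Algebra K A] [Ring B] [Algebra K B] [Ring C]
  [Algebra K C] {φ : A →ₐ[K] B} {ψ : A →ₐ[K] C} (h : ∀ a, φ a = 0 → ψ a = 0)
include h

theorem CubicExchange.of_ker_le {σ₂ σ₃ : K} {x y : ℕ → A}
    (hxy : CubicExchange σ₂ σ₃ (fun k => φ (x k)) (fun k => φ (y k))) :
    CubicExchange σ₂ σ₃ (fun k => ψ (x k)) (fun k => ψ (y k)) := by
  intro i j
  have hij := hxy i j
  rw [← sub_eq_zero] at hij ⊢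
  simp only [← map_mul, ← map_sub, ← map_add, ← map_nsmul, ← map_smul] at hij ⊢
  exact h _ hij

theorem SerreRelation.of_ker_le {x : ℕ → A} (hx : SerreRelation fun k => φ (x k)) :
    SerreRelation fun k => ψ (x k) := by
  intro i
  have hi := hx i
  simp only [← map_mul, ← map_sub, ← map_sum] at hi ⊢
  exact h _ hi

end Transfer

section Approximation

open Filter

variable {V W K : Type*} [CommRing K] [AddCommGroup V] [Module K V] [AddCommGroup W] [Module K W]

/-- The algebra of pairs consisting of an operator on `V` and a sequence of operators on `W` which,
on every fixed vector of `V`, eventually agree along `g`. -/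
def approximations (g : V →ₗ[K] W) : Subalgebra K (Module.End K V × (ℕ → Module.End K W)) where
  carrier := {T | ∀ v, ∀ᶠ N in atTop, g (T.1 v) = T.2 N (g v)}
  mul_mem' {S T} hS hT v := by
    filter_upwards [hS (T.1 v), hT v] with N hN hN'
    rw [Prod.fst_mul, Module.End.mul_apply, hN, hN']
    rfl
  add_mem' {S T} hS hT v := by
    filter_upwards [hS v, hT v] with N hN hN'
    rw [Prod.fst_add, LinearMap.add_apply, map_add, hN, hN']
    rfl
  algebraMap_mem' c v := Eventually.of_forall fun _ => map_smul g c v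

variable {g : V →ₗ[K] W}

instance : Ring (approximations g) := (approximations g).toRing

/-- The operator on `V` that is approximated. -/
def limitOp : approximations g →ₐ[K] Module.End K V :=
  (AlgHom.fst K _ _).comp (approximations g).val

/-- The sequence of operators on `W` that approximates. -/
def stageOps : approximations g →ₐ[K] (ℕ → Module.End K W) :=
  (AlgHom.snd K _ _).comp (approximations g).val

theorem mem_approximations_of_span_eq_top {s : Set V} (hs : Submodule.span K s = ⊤)
    {S : Module.End K V} {T : ℕ → Module.End K W}
    (h : ∀ v ∈ s, ∀ᶠ N in atTop, g (S v) = T N (g v)) : (S, T) ∈ approximations g := by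
  intro v
  have hv : v ∈ Submodule.span K s := hs ▸ Submodule.mem_top
  induction hv using Submodule.span_induction with
  | mem v hv => exact h v hv
  | zero => simp
  | add v w _ _ hv hw =>
    filter_upwards [hv, hw] with N hN hN'
    simp only [map_add, hN, hN']
  | smul c v _ hv =>
    filter_upwards [hv] with N hN
    simp only [map_smul, hN]

variable (hg : Function.Injective g)
include hg

theorem limitOp_eq_of_eventually {s : Set V} (hs : Submodule.span K s = ⊤)
    {S T : approximations g}
    (h : ∀ v ∈ s, ∀ᶠ N in atTop, stageOps S N (g v) = stageOps T N (g v)) :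
    limitOp S = limitOp T := by
  refine LinearMap.ext_on hs fun v hv => hg ?_
  obtain ⟨N, hS, hT, hN⟩ := ((S.2 v).and ((T.2 v).and (h v hv))).exists
  exact hS.trans (hN.trans hT.symm)

theorem limitOp_eq_zero_of_stageOps_eq_zero (T : approximations g) (h : stageOps T = 0) :
    limitOp T = 0 := by
  rw [← map_zero (limitOp (g := g))]
  refine limitOp_eq_of_eventually hg Submodule.span_univ fun v _ => Eventually.of_forall fun N => ?_
  rw [h, map_zero]

theorem limitOp_commutator_eq_of_eventually {s : Set V} (hs : Submodule.span K s = ⊤)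
    {S T R : approximations g}
    (h : ∀ v ∈ s, ∀ᶠ N in atTop,
      (stageOps S N * stageOps T N - stageOps T N * stageOps S N) (g v) = stageOps R N (g v)) :
    limitOp S * limitOp T - limitOp T * limitOp S = limitOp R := by
  rw [← map_mul, ← map_mul, ← map_sub]
  refine limitOp_eq_of_eventually hg hs ?_
  simpa only [map_sub, map_mul, Pi.sub_apply, Pi.mul_apply] using h

theorem limitOp_commutator_eq {S T R : approximations g}
    (h : ∀ N, stageOps S N * stageOps T N - stageOps T N * stageOps S N = stageOps R N) :
    limitOp S * limitOp T - limitOp T * limitOp S = limitOp R :=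
  limitOp_commutator_eq_of_eventually hg Submodule.span_univ fun v _ =>
    Eventually.of_forall fun N => congrArg (· (g v)) (h N)

theorem cubicExchange_limitOp {σ₂ σ₃ : K} {x y : ℕ → approximations g}
    (hxy : ∀ N, CubicExchange σ₂ σ₃ (fun k => stageOps (x k) N) (fun k => stageOps (y k) N)) :
    CubicExchange σ₂ σ₃ (fun k => limitOp (x k)) (fun k => limitOp (y k)) := by
  have h : CubicExchange σ₂ σ₃ (fun k => stageOps (x k)) (fun k => stageOps (y k)) :=
    fun i j => funext fun N => hxy N i j
  exact CubicExchange.of_ker_le (φ := stageOps (g := g)) (ψ := limitOp (g := g))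
    (limitOp_eq_zero_of_stageOps_eq_zero hg) (x := x) (y := y) h

theorem serreRelation_limitOp {x : ℕ → approximations g}
    (hx : ∀ N, SerreRelation fun k => stageOps (x k) N) :
    SerreRelation fun k => limitOp (x k) := by
  have h : SerreRelation fun k => stageOps (x k) :=
    fun i => funext fun N => (Finset.sum_apply _ _ _).trans (hx N i)
  exact SerreRelation.of_ker_le (φ := stageOps (g := g)) (ψ := limitOp (g := g))
    (limitOp_eq_zero_of_stageOps_eq_zero hg) (x := x) h

end Approximation

section Partitions

/-- A partition as a sequence of integral row lengths. -/
def toSeq (lam : Ptn) (i : ℕ) : ℤ := lam.1 i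

theorem toSeq_injective : Function.Injective toSeq := fun _ _ h =>
  Subtype.ext (funext fun i => Int.ofNat_inj.1 (congrFun h i))

theorem eq_zero_of_plen_le {lam : Ptn} {i : ℕ} (h : plen lam ≤ i) : lam.1 i = 0 :=
  Nat.le_zero.1 ((lam.2.1 h).trans_eq (Nat.find_spec lam.2.2))

theorem toSeq_eq_zero_of_plen_le {lam : Ptn} {i : ℕ} (h : plen lam ≤ i) : toSeq lam i = 0 :=
  congrArg Nat.cast (eq_zero_of_plen_le h)

theorem Fock.Addable.le_plen {lam : Ptn} {i : ℕ} (h : Addable lam i) : i ≤ plen lam := by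
  by_contra! hi
  exact (eq_zero_of_plen_le (lam := lam) le_rfl ▸ h (plen lam) hi).not_ge (Nat.zero_le _)

theorem Fock.Removable.lt_plen {lam : Ptn} {i : ℕ} (h : Removable lam i) : i < plen lam := by
  by_contra! hi
  exact (eq_zero_of_plen_le hi ▸ h : lam.1 (i + 1) < 0).not_ge (Nat.zero_le _)

theorem exists_eq_succ_of_not_addable {lam : Ptn} {i : ℕ} (h : ¬ Addable lam i) :
    ∃ p, i = p + 1 ∧ toSeq lam (p + 1) = toSeq lam p := by
  simp only [Addable, not_forall, not_lt] at h
  obtain ⟨q, hqi, hq⟩ := h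
  obtain ⟨p, rfl⟩ := Nat.exists_eq_succ_of_ne_zero (Nat.ne_zero_of_lt hqi)
  exact ⟨p, rfl, congrArg Nat.cast
    ((lam.2.1 p.le_succ).antisymm ((lam.2.1 (Nat.lt_succ_iff.1 hqi)).trans hq))⟩

theorem toSeq_succ_eq_of_not_removable {lam : Ptn} {i : ℕ} (h : ¬ Removable lam i) :
    toSeq lam (i + 1) = toSeq lam i :=
  congrArg Nat.cast ((lam.2.1 i.le_succ).antisymm (not_lt.1 h))

theorem toSeq_addBox {lam : Ptn} {i : ℕ} (h : Addable lam i) :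
    toSeq (addBox lam i h) = toSeq lam + Pi.single i 1 := by
  funext p
  rcases eq_or_ne p i with rfl | hp
  · simp [toSeq, addBox]
  · simp [toSeq, addBox, hp]

theorem toSeq_remBox {lam : Ptn} {i : ℕ} (h : Removable lam i) :
    toSeq (remBox lam i h) = toSeq lam - Pi.single i 1 := by
  funext p
  rcases eq_or_ne p i with rfl | hp
  · simp [toSeq, remBox, Nat.cast_pred (Nat.zero_lt_of_lt h)]
  · simp [toSeq, remBox, hp]

end Partitions

section FockCoefficients

variable {h1 h2 : ℂ} (h : Generic h1 h2) (u : ℂ)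

theorem rowPos_toSeq (h1 h2 u : ℂ) (lam : Ptn) (i : ℕ) :
    rowPos h1 h2 u (toSeq lam) i = lam.1 i * h1 + i * h2 + u := by
  simp [rowPos, toSeq]

theorem ecoef_eq_coef_up_mul_pow (j : ℕ) (lam : Ptn) {i N : ℕ} (hi : i < N) :
    ecoef h1 h2 u j lam i =
      (up h u N).coef (toSeq lam) i * (up h u N).pos (toSeq lam) i ^ j := by
  have hrange : Finset.range i = (Finset.range N).filter (· < i) := by
    ext p
    simp only [Finset.mem_range, Finset.mem_filter]
    omega
  rw [show (up h u N).pos = rowPos h1 h2 u from rfl, rowPos_toSeq, ecoef, hrange,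
    Finset.prod_filter, BoxMoves.coef]
  congr 2
  refine Finset.prod_congr rfl fun p _ => if_congr Iff.rfl ?_ rfl
  rw [structureFun, show (up h u N).pos = rowPos h1 h2 u from rfl, rowPos_toSeq, rowPos_toSeq]
  congr 1 <;> ring

theorem fcoef_eq_mul_prod_removalFactor (h1 h2 u : ℂ) (j : ℕ) (lam : Ptn) (i : ℕ) :
    let x := rowPos h1 h2 u (toSeq lam)
    fcoef h1 h2 u j lam i = -(1 / h1) * ((x (i + 1) - x i - h2) / (x (i + 1) - x i + h1) *
      ∏ p ∈ Finset.Icc (i + 1) (plen lam), removalFactor h1 h2 x i p) * (x i - h1) ^ j := by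
  intro x
  rw [fcoef, mul_assoc (-(1 / h1))]
  congr 3
  · simp only [x, rowPos_toSeq]
    push_cast
    congr 1 <;> ring
  · refine Finset.prod_congr rfl fun p _ => ?_
    simp only [removalFactor, x, rowPos_toSeq]
    push_cast
    congr 1 <;> ring
  · simp only [x, rowPos_toSeq]
    ring

include h in
theorem prod_Icc_removalFactor_eq_prod_Ico (lam : Ptn) {N : ℕ} (hN : plen lam < N) (i : ℕ) :
    ∏ p ∈ Finset.Icc (i + 1) (plen lam), removalFactor h1 h2 (rowPos h1 h2 u (toSeq lam)) i p =
      ∏ p ∈ Finset.Ico (i + 1) N, removalFactor h1 h2 (rowPos h1 h2 u (toSeq lam)) i p := by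
  refine Finset.prod_subset (fun p hp => ?_) fun p hp hp' => ?_
  · simp only [Finset.mem_Icc, Finset.mem_Ico] at hp ⊢
    omega
  · simp only [Finset.mem_Icc, Finset.mem_Ico] at hp hp'
    have hlen : plen lam ≤ p := by omega
    refine removalFactor_eq_one (h.separated_rowPos u _) hp.1 ?_
    rw [rowPos, rowPos, toSeq_eq_zero_of_plen_le hlen,
      toSeq_eq_zero_of_plen_le (hlen.trans p.le_succ)]
    push_cast
    ring

theorem fcoef_eq_coef_down_mul_pow (j : ℕ) (lam : Ptn) {i N : ℕ} (hN : plen lam < N) (hi : i < N) :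
    fcoef h1 h2 u j lam i =
      (down h u N).coef (toSeq lam) i * (down h u N).pos (toSeq lam) i ^ j := by
  rw [coef_down_eq_mul_prod_removalFactor h u hi (toSeq_eq_zero_of_plen_le hN.le),
    ← prod_Icc_removalFactor_eq_prod_Ico h u lam hN, fcoef_eq_mul_prod_removalFactor]
  rfl

end FockCoefficients

section FockOperators

open Filter

variable {h1 h2 : ℂ} (h : Generic h1 h2) (u : ℂ)

/-- The embedding of the Fock space into the free vector space on all integral sequences, where
the operators of box moves act. -/
def toSeqSpace : FockSp →ₗ[ℂ] ((ℕ → ℤ) →₀ ℂ) := Finsupp.lmapDomain ℂ ℂ toSeq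

theorem toSeqSpace_injective : Function.Injective toSeqSpace :=
  Finsupp.mapDomain_injective toSeq_injective

theorem toSeqSpace_single (lam : Ptn) (c : ℂ) :
    toSeqSpace (Finsupp.single lam c) = Finsupp.single (toSeq lam) c :=
  Finsupp.mapDomain_single

theorem span_range_single_one :
    Submodule.span ℂ (Set.range fun lam : Ptn => Finsupp.single lam (1 : ℂ)) = ⊤ :=
  Finsupp.basisSingleOne.span_eq

theorem toSeqSpace_eOp_single (j : ℕ) {lam : Ptn} {N : ℕ} (hN : plen lam < N) :
    toSeqSpace (eOp h1 h2 u j (Finsupp.single lam 1)) =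
      (up h u N).op j (toSeqSpace (Finsupp.single lam 1)) := by
  have hsub : Finset.range (plen lam + 1) ⊆ Finset.range N := Finset.range_subset_range.2 hN
  have hevec : eOp h1 h2 u j (Finsupp.single lam 1) = evec h1 h2 u j lam := by simp [eOp]
  rw [hevec, evec, map_sum, toSeqSpace_single, BoxMoves.op_single]
  refine (Finset.sum_subset hsub fun i _ hi => ?_).trans (Finset.sum_congr rfl fun i hi => ?_)
  · rw [dif_neg fun hadd => hi (Finset.mem_range.2 (Nat.lt_succ_of_le hadd.le_plen)), map_zero]
  replace hi : i < N := Finset.mem_range.1 hi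
  split_ifs with hadd
  · rw [toSeqSpace_single, toSeq_addBox,
      ecoef_eq_coef_up_mul_pow h u j lam hi, one_mul]
    rfl
  · obtain ⟨p, rfl, hp⟩ := exists_eq_succ_of_not_addable hadd
    rw [coef_up_eq_zero h u hi hp, zero_mul, mul_zero, Finsupp.single_zero, map_zero]

theorem toSeqSpace_fOp_single (j : ℕ) {lam : Ptn} {N : ℕ} (hN : plen lam < N) :
    toSeqSpace (fOp h1 h2 u j (Finsupp.single lam 1)) =
      (down h u N).op j (toSeqSpace (Finsupp.single lam 1)) := by
  have hsub : Finset.range (plen lam) ⊆ Finset.range N := Finset.range_subset_range.2 hN.le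
  have hfvec : fOp h1 h2 u j (Finsupp.single lam 1) = fvec h1 h2 u j lam := by simp [fOp]
  rw [hfvec, fvec, map_sum, toSeqSpace_single, BoxMoves.op_single]
  refine (Finset.sum_subset hsub fun i _ hi => ?_).trans (Finset.sum_congr rfl fun i hi => ?_)
  · rw [dif_neg fun hrem => hi (Finset.mem_range.2 hrem.lt_plen), map_zero]
  replace hi : i < N := Finset.mem_range.1 hi
  split_ifs with hrem
  · rw [toSeqSpace_single, toSeq_remBox,
      fcoef_eq_coef_down_mul_pow h u j lam hN hi, one_mul]
    rfl
  · have hcoef : (down h u N).coef (toSeq lam) i = 0 := by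
      rcases (Nat.succ_le_of_lt hi).eq_or_lt with rfl | hi'
      · exact coef_down_last_eq_zero h u (toSeq_eq_zero_of_plen_le (Nat.lt_succ_iff.1 hN))
      · exact coef_down_eq_zero h u hi' (toSeq_succ_eq_of_not_removable hrem)
    rw [hcoef, zero_mul, mul_zero, Finsupp.single_zero, map_zero]

/-- The approximation of `e_k` by the operators that add a box to one of the first `N` rows. -/
def eApprox (k : ℕ) : approximations toSeqSpace :=
  ⟨(eOp h1 h2 u k, fun N => (up h u N).op k),
    mem_approximations_of_span_eq_top span_range_single_one <| Set.forall_mem_range.2 fun _ =>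
      (eventually_gt_atTop _).mono fun _ => toSeqSpace_eOp_single h u k⟩

/-- The approximation of `f_k` by the operators that remove a box from one of the first `N`
rows. -/
def fApprox (k : ℕ) : approximations toSeqSpace :=
  ⟨(fOp h1 h2 u k, fun N => (down h u N).op k),
    mem_approximations_of_span_eq_top span_range_single_one <| Set.forall_mem_range.2 fun _ =>
      (eventually_gt_atTop _).mono fun _ => toSeqSpace_fOp_single h u k⟩

/-- The approximation of `ψ_k` by commutators of the approximations of `e_k` and `f_0`. -/
def psiApprox (k : ℕ) : approximations toSeqSpace :=
  eApprox h u k * fApprox h u 0 - fApprox h u 0 * eApprox h u k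

theorem stageOps_psiApprox (k : ℕ) :
    stageOps (psiApprox h u k) = fun N => psiDiag h1 h2 u N k :=
  funext fun N => up_op_mul_down_op_sub h u N k 0

include h

theorem psiOp_mul_psiOp_sub (i j : ℕ) :
    psiOp h1 h2 u i * psiOp h1 h2 u j - psiOp h1 h2 u j * psiOp h1 h2 u i = 0 :=
  limitOp_commutator_eq toSeqSpace_injective (S := psiApprox h u i) (T := psiApprox h u j) (R := 0)
    fun N => by
      rw [stageOps_psiApprox, stageOps_psiApprox]
      exact sub_eq_zero.2 (commute_diagonal _ _)

theorem eOp_mul_fOp_sub (i j : ℕ) :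
    eOp h1 h2 u i * fOp h1 h2 u j - fOp h1 h2 u j * eOp h1 h2 u i = psiOp h1 h2 u (i + j) :=
  limitOp_commutator_eq toSeqSpace_injective (S := eApprox h u i) (T := fApprox h u j)
    (R := psiApprox h u (i + j)) fun N => by
      rw [stageOps_psiApprox]
      exact up_op_mul_down_op_sub h u N i j

theorem cubicExchange_eOp :
    CubicExchange (h1 * h2 + h1 * (-h1 - h2) + h2 * (-h1 - h2)) (h1 * h2 * (-h1 - h2))
      (eOp h1 h2 u) (eOp h1 h2 u) :=
  cubicExchange_limitOp toSeqSpace_injective (x := eApprox h u) (y := eApprox h u)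
    fun N => (up h u N).cubicExchange_op

theorem cubicExchange_fOp :
    CubicExchange (h1 * h2 + h1 * (-h1 - h2) + h2 * (-h1 - h2)) (-(h1 * h2 * (-h1 - h2)))
      (fOp h1 h2 u) (fOp h1 h2 u) :=
  cubicExchange_limitOp toSeqSpace_injective (x := fApprox h u) (y := fApprox h u)
    fun N => cubicExchange_down_op h u N

theorem cubicExchange_psiOp_eOp :
    CubicExchange (h1 * h2 + h1 * (-h1 - h2) + h2 * (-h1 - h2)) (h1 * h2 * (-h1 - h2))
      (psiOp h1 h2 u) (eOp h1 h2 u) := by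
  refine cubicExchange_limitOp toSeqSpace_injective (x := psiApprox h u) (y := eApprox h u)
    fun N => ?_
  simp only [stageOps_psiApprox]
  exact cubicExchange_psiDiag_up_op h u N

theorem cubicExchange_psiOp_fOp :
    CubicExchange (h1 * h2 + h1 * (-h1 - h2) + h2 * (-h1 - h2)) (-(h1 * h2 * (-h1 - h2)))
      (psiOp h1 h2 u) (fOp h1 h2 u) := by
  refine cubicExchange_limitOp toSeqSpace_injective (x := psiApprox h u) (y := fApprox h u)
    fun N => ?_
  simp only [stageOps_psiApprox]
  exact cubicExchange_psiDiag_down_op h u N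

theorem serreRelation_eOp : SerreRelation (eOp h1 h2 u) :=
  serreRelation_limitOp toSeqSpace_injective (x := eApprox h u)
    fun N => (up h u N).serreRelation_op

theorem serreRelation_fOp : SerreRelation (fOp h1 h2 u) :=
  serreRelation_limitOp toSeqSpace_injective (x := fApprox h u)
    fun N => (down h u N).serreRelation_op

theorem psiOp_mul_eOp_sub {k : ℕ} (hk : k ≤ 2) (j : ℕ) :
    psiOp h1 h2 u k * eOp h1 h2 u j - eOp h1 h2 u j * psiOp h1 h2 u k =
      (if k = 2 then 2 else 0 : ℂ) • eOp h1 h2 u j := by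
  refine limitOp_commutator_eq_of_eventually toSeqSpace_injective span_range_single_one
    (S := psiApprox h u k) (T := eApprox h u j)
    (R := (if k = 2 then 2 else 0 : ℂ) • eApprox h u j) (Set.forall_mem_range.2 fun lam => ?_)
  filter_upwards [eventually_ge_atTop (plen lam + 2)] with N hN
  obtain ⟨p, rfl⟩ := Nat.exists_eq_add_of_le' (Nat.le_of_add_left_le hN)
  have hzero (q : ℕ) (hq : p ≤ q) : toSeq lam q = 0 := toSeq_eq_zero_of_plen_le (by omega)
  rw [stageOps_psiApprox, toSeqSpace_single]
  exact psiDiag_mul_up_op_sub_apply_single h u (hzero p le_rfl)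
    (hzero _ p.le_succ) (hzero (p + 2) (Nat.le_add_right p 2)) hk j

theorem psiOp_mul_fOp_sub {k : ℕ} (hk : k ≤ 2) (j : ℕ) :
    psiOp h1 h2 u k * fOp h1 h2 u j - fOp h1 h2 u j * psiOp h1 h2 u k =
      -(if k = 2 then 2 else 0 : ℂ) • fOp h1 h2 u j := by
  refine limitOp_commutator_eq_of_eventually toSeqSpace_injective span_range_single_one
    (S := psiApprox h u k) (T := fApprox h u j)
    (R := -(if k = 2 then 2 else 0 : ℂ) • fApprox h u j) (Set.forall_mem_range.2 fun lam => ?_)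
  filter_upwards [eventually_ge_atTop (plen lam + 1)] with N hN
  obtain ⟨p, rfl⟩ := Nat.exists_eq_add_of_le' (Nat.le_of_add_left_le hN)
  have hzero (q : ℕ) (hq : p ≤ q) : toSeq lam q = 0 := toSeq_eq_zero_of_plen_le (by omega)
  rw [stageOps_psiApprox, toSeqSpace_single]
  exact psiDiag_mul_down_op_sub_apply_single h u (hzero p le_rfl) (hzero _ p.le_succ) hk j

end FockOperators

/-- The Fock-module operators `e_j, f_j` and `ψ_k := [e_k, f_0]`
satisfy all defining relations (Y0)–(Y6) of the affine Yangian of `gl_1` with parameters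
`h1, h2, h3 = −h1−h2` (and `σ2 = h1h2+h1h3+h2h3`, `σ3 = h1h2h3`); i.e., the free vector
space on the set of partitions is a module over the affine Yangian of `gl_1`. -/
theorem fock_module_affine_yangian (h1 h2 u : ℂ)
    (hgen : ∀ a b : ℤ, ¬(a = 0 ∧ b = 0) → (a : ℂ) * h1 + (b : ℂ) * h2 ≠ 0) :
    ∀ h3 σ2 σ3 : ℂ, h3 = -h1 - h2 → σ2 = h1*h2 + h1*h3 + h2*h3 → σ3 = h1*h2*h3 →
    -- (Y0)
    (∀ i j : ℕ, psiOp h1 h2 u i * psiOp h1 h2 u j - psiOp h1 h2 u j * psiOp h1 h2 u i = 0) ∧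
    -- (Y1)
    (∀ i j : ℕ,
      (eOp h1 h2 u (i+3) * eOp h1 h2 u j - eOp h1 h2 u j * eOp h1 h2 u (i+3))
        - 3 • (eOp h1 h2 u (i+2) * eOp h1 h2 u (j+1) - eOp h1 h2 u (j+1) * eOp h1 h2 u (i+2))
        + 3 • (eOp h1 h2 u (i+1) * eOp h1 h2 u (j+2) - eOp h1 h2 u (j+2) * eOp h1 h2 u (i+1))
        - (eOp h1 h2 u i * eOp h1 h2 u (j+3) - eOp h1 h2 u (j+3) * eOp h1 h2 u i)
        + σ2 • ((eOp h1 h2 u (i+1) * eOp h1 h2 u j - eOp h1 h2 u j * eOp h1 h2 u (i+1))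
            - (eOp h1 h2 u i * eOp h1 h2 u (j+1) - eOp h1 h2 u (j+1) * eOp h1 h2 u i))
      = σ3 • (eOp h1 h2 u i * eOp h1 h2 u j + eOp h1 h2 u j * eOp h1 h2 u i)) ∧
    -- (Y2)
    (∀ i j : ℕ,
      (fOp h1 h2 u (i+3) * fOp h1 h2 u j - fOp h1 h2 u j * fOp h1 h2 u (i+3))
        - 3 • (fOp h1 h2 u (i+2) * fOp h1 h2 u (j+1) - fOp h1 h2 u (j+1) * fOp h1 h2 u (i+2))
        + 3 • (fOp h1 h2 u (i+1) * fOp h1 h2 u (j+2) - fOp h1 h2 u (j+2) * fOp h1 h2 u (i+1))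
        - (fOp h1 h2 u i * fOp h1 h2 u (j+3) - fOp h1 h2 u (j+3) * fOp h1 h2 u i)
        + σ2 • ((fOp h1 h2 u (i+1) * fOp h1 h2 u j - fOp h1 h2 u j * fOp h1 h2 u (i+1))
            - (fOp h1 h2 u i * fOp h1 h2 u (j+1) - fOp h1 h2 u (j+1) * fOp h1 h2 u i))
      = (-σ3) • (fOp h1 h2 u i * fOp h1 h2 u j + fOp h1 h2 u j * fOp h1 h2 u i)) ∧
    -- (Y3)
    (∀ i j : ℕ,
      eOp h1 h2 u i * fOp h1 h2 u j - fOp h1 h2 u j * eOp h1 h2 u i = psiOp h1 h2 u (i + j)) ∧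
    -- (Y4)
    (∀ i j : ℕ,
      (psiOp h1 h2 u (i+3) * eOp h1 h2 u j - eOp h1 h2 u j * psiOp h1 h2 u (i+3))
        - 3 • (psiOp h1 h2 u (i+2) * eOp h1 h2 u (j+1) - eOp h1 h2 u (j+1) * psiOp h1 h2 u (i+2))
        + 3 • (psiOp h1 h2 u (i+1) * eOp h1 h2 u (j+2) - eOp h1 h2 u (j+2) * psiOp h1 h2 u (i+1))
        - (psiOp h1 h2 u i * eOp h1 h2 u (j+3) - eOp h1 h2 u (j+3) * psiOp h1 h2 u i)
        + σ2 • ((psiOp h1 h2 u (i+1) * eOp h1 h2 u j - eOp h1 h2 u j * psiOp h1 h2 u (i+1))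
            - (psiOp h1 h2 u i * eOp h1 h2 u (j+1) - eOp h1 h2 u (j+1) * psiOp h1 h2 u i))
      = σ3 • (psiOp h1 h2 u i * eOp h1 h2 u j + eOp h1 h2 u j * psiOp h1 h2 u i)) ∧
    -- (Y4′)
    (∀ j : ℕ, psiOp h1 h2 u 0 * eOp h1 h2 u j - eOp h1 h2 u j * psiOp h1 h2 u 0 = 0) ∧
    (∀ j : ℕ, psiOp h1 h2 u 1 * eOp h1 h2 u j - eOp h1 h2 u j * psiOp h1 h2 u 1 = 0) ∧
    (∀ j : ℕ, psiOp h1 h2 u 2 * eOp h1 h2 u j - eOp h1 h2 u j * psiOp h1 h2 u 2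
      = 2 • eOp h1 h2 u j) ∧
    -- (Y5)
    (∀ i j : ℕ,
      (psiOp h1 h2 u (i+3) * fOp h1 h2 u j - fOp h1 h2 u j * psiOp h1 h2 u (i+3))
        - 3 • (psiOp h1 h2 u (i+2) * fOp h1 h2 u (j+1) - fOp h1 h2 u (j+1) * psiOp h1 h2 u (i+2))
        + 3 • (psiOp h1 h2 u (i+1) * fOp h1 h2 u (j+2) - fOp h1 h2 u (j+2) * psiOp h1 h2 u (i+1))
        - (psiOp h1 h2 u i * fOp h1 h2 u (j+3) - fOp h1 h2 u (j+3) * psiOp h1 h2 u i)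
        + σ2 • ((psiOp h1 h2 u (i+1) * fOp h1 h2 u j - fOp h1 h2 u j * psiOp h1 h2 u (i+1))
            - (psiOp h1 h2 u i * fOp h1 h2 u (j+1) - fOp h1 h2 u (j+1) * psiOp h1 h2 u i))
      = (-σ3) • (psiOp h1 h2 u i * fOp h1 h2 u j + fOp h1 h2 u j * psiOp h1 h2 u i)) ∧
    -- (Y5′)
    (∀ j : ℕ, psiOp h1 h2 u 0 * fOp h1 h2 u j - fOp h1 h2 u j * psiOp h1 h2 u 0 = 0) ∧
    (∀ j : ℕ, psiOp h1 h2 u 1 * fOp h1 h2 u j - fOp h1 h2 u j * psiOp h1 h2 u 1 = 0) ∧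
    (∀ j : ℕ, psiOp h1 h2 u 2 * fOp h1 h2 u j - fOp h1 h2 u j * psiOp h1 h2 u 2
      = -(2 • fOp h1 h2 u j)) ∧
    -- (Y6)
    (∀ i : Fin 3 → ℕ, ∑ σ : Equiv.Perm (Fin 3),
      (eOp h1 h2 u (i (σ 0)) * (eOp h1 h2 u (i (σ 1)) * eOp h1 h2 u (i (σ 2) + 1)
            - eOp h1 h2 u (i (σ 2) + 1) * eOp h1 h2 u (i (σ 1)))
        - (eOp h1 h2 u (i (σ 1)) * eOp h1 h2 u (i (σ 2) + 1)
            - eOp h1 h2 u (i (σ 2) + 1) * eOp h1 h2 u (i (σ 1))) * eOp h1 h2 u (i (σ 0))) = 0) ∧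
    (∀ i : Fin 3 → ℕ, ∑ σ : Equiv.Perm (Fin 3),
      (fOp h1 h2 u (i (σ 0)) * (fOp h1 h2 u (i (σ 1)) * fOp h1 h2 u (i (σ 2) + 1)
            - fOp h1 h2 u (i (σ 2) + 1) * fOp h1 h2 u (i (σ 1)))
        - (fOp h1 h2 u (i (σ 1)) * fOp h1 h2 u (i (σ 2) + 1)
            - fOp h1 h2 u (i (σ 2) + 1) * fOp h1 h2 u (i (σ 1))) * fOp h1 h2 u (i (σ 0))) = 0) := by
  rintro _ _ _ rfl rfl rfl
  have h : Generic h1 h2 := hgen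
  exact ⟨psiOp_mul_psiOp_sub h u, cubicExchange_eOp h u, cubicExchange_fOp h u,
    eOp_mul_fOp_sub h u, cubicExchange_psiOp_eOp h u,
    fun j => by simpa using psiOp_mul_eOp_sub h u zero_le_two j,
    fun j => by simpa using psiOp_mul_eOp_sub h u one_le_two j,
    fun j => by rw [psiOp_mul_eOp_sub h u le_rfl j, if_pos rfl]; module,
    cubicExchange_psiOp_fOp h u,
    fun j => by simpa using psiOp_mul_fOp_sub h u zero_le_two j,
    fun j => by simpa using psiOp_mul_fOp_sub h u one_le_two j,
    fun j => by rw [psiOp_mul_fOp_sub h u le_rfl j, if_pos rfl]; module,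
    serreRelation_eOp h u, serreRelation_fOp h u⟩

end
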